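/- Let n ≥ 2. There exist constants κ ∈ (0,1) and C > 0, depending only on n, such that: for every bounded measurable W : ℝⁿ → ℝ and every smooth solution u of Δ²u = W·u on B⁺₃ which extends smoothly up to the flat boundary 𝐁₃, one has ‖u‖_{L²(B⁺₁)} ≤ e^{C(1 + ‖W‖_{L^∞}^{1/3})} · ‖u‖_{L²(B⁺₂)}^{κ} · ( Σ_{j=0}^{3} ‖∂_{x_n}^j u‖_{H^{3−j}(𝐁₂)} )^{1−κ}. -/

import Mathlib

open MeasureTheory Metric Set

noncomputable section

/-- The Euclidean Laplacian of `u : ℝⁿ → ℝ`. -/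
def lap {n : ℕ} (u : EuclideanSpace ℝ (Fin n) → ℝ) (x : EuclideanSpace ℝ (Fin n)) : ℝ :=
  ∑ i : Fin n, iteratedFDeriv ℝ 2 u x ![EuclideanSpace.single i 1, EuclideanSpace.single i 1]

def lastIdx (n : ℕ) (h : 0 < n) : Fin n := ⟨n - 1, Nat.sub_lt h one_pos⟩

/-- The open half ball `B⁺_R = {x : |x| < R, xₙ > 0}`. -/
def halfBall (n : ℕ) (h : 0 < n) (R : ℝ) : Set (EuclideanSpace ℝ (Fin n)) :=
  {x | ‖x‖ < R ∧ 0 < x (lastIdx n h)}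

/-- The isometric inclusion of `ℝ^{n-1}` as the hyperplane `{xₙ = 0}` of `ℝⁿ`. -/
def incl (n : ℕ) (y : EuclideanSpace ℝ (Fin (n - 1))) : EuclideanSpace ℝ (Fin n) :=
  (WithLp.equiv 2 (Fin n → ℝ)).symm
    (fun i => if h : (i : ℕ) < n - 1 then y ⟨(i : ℕ), h⟩ else 0)

/-- The partial derivative `∂ᵢ g`. -/
def pd {n : ℕ} (i : Fin n) (g : EuclideanSpace ℝ (Fin n) → ℝ)
    (x : EuclideanSpace ℝ (Fin n)) : ℝ :=
  fderiv ℝ g x (EuclideanSpace.single i 1)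

/-- The multi-index partial derivative `∂^α g`. -/
def mpd {n : ℕ} (α : Fin n → ℕ) (g : EuclideanSpace ℝ (Fin n) → ℝ) :
    EuclideanSpace ℝ (Fin n) → ℝ :=
  (List.finRange n).foldr (fun i h => (pd i)^[α i] h) g

/-- The square of the `H^m` norm of `w` on the boundary disc `𝐁_R`: the sum over tangential
multi-indices `α` with `|α| ≤ m` of `∫_{𝐁_R} |∂^α_{x'} w|²`, with respect to `(n-1)`-dimensional
Lebesgue measure on the hyperplane `{xₙ = 0}`. -/
def bdryHnormSq (n m : ℕ) (R : ℝ) (w : EuclideanSpace ℝ (Fin n) → ℝ) : ℝ :=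
  ∑ α : Fin (n - 1) → Fin (m + 1),
    if (∑ i, (α i : ℕ)) ≤ m then
      ∫ y in ball (0 : EuclideanSpace ℝ (Fin (n - 1))) R,
        (mpd (fun i => (α i : ℕ)) (fun z => w (incl n z)) y) ^ 2
    else 0

/-!
The proof is a Carleman estimate with weight `e^{tφ}`, `φ = e^{-2ρ}`, where `ρ = |x + eₙ|²` is the
squared distance to a pole outside the half ball. The conjugated Laplacian splits as `S + A`, up to
a zeroth order correction its symmetric and antisymmetric parts; since `ρ ≥ 1` on the half space,
`2 S A` is a positive quantity plus a divergence, which gives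
`t³ ∫ |e^{tφ} v|² ≲ ∫ |e^{tφ} Δv|² + boundary terms`.

Apply this to cutoffs of both `u` and `Δu`. As `|Δ²u| ≤ M |u|`, the coupled pair of inequalities
closes as soon as `t³ ≳ M`: this is where the exponent `1/3` comes from, a single second-order
inequality with potential `M` would need `t³ ≳ M²`. The cutoff errors live in the shell
`17/4 ≤ ρ ≤ 9/2`, where `φ ≤ e^{-17/2}` and where a Caccioppoli inequality bounds `∇u`, `Δu` and
`∇Δu` by `u` and the Cauchy data. On `B⁺₁` one has `ρ < 4`, hence `φ ≥ e^{-8}`. So for some `δ > 0`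
and all `t ≳ 1 + M^{1/3}` one gets `∫_{B⁺₁} u² ≲ e^{-δt} ∫_{B⁺₂} u² + e^{βt} (Cauchy data)²`, and
optimizing in `t` gives the interpolation inequality.
-/

/-- The Euclidean space `ℝⁿ`. -/
abbrev Euc (n : ℕ) := EuclideanSpace ℝ (Fin n)

lemma halfBall_subset_halfBall {n : ℕ} (hn : 0 < n) {r R : ℝ} (h : r ≤ R) :
    halfBall n hn r ⊆ halfBall n hn R := fun _ hx => ⟨hx.1.trans_le h, hx.2⟩

/-- The algebra of smooth functions on `ℝⁿ`. Working in it turns the vector calculus of the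
Carleman estimate into identities in a commutative ring. -/
def smoothSubalgebra (n : ℕ) : Subalgebra ℝ (Euc n → ℝ) where
  carrier := {f | ContDiff ℝ (⊤ : ℕ∞) f}
  mul_mem' hf hg := mem_ofPred.2 (ContDiff.mul (mem_ofPred.1 hf) (mem_ofPred.1 hg))
  add_mem' hf hg := mem_ofPred.2 (ContDiff.add (mem_ofPred.1 hf) (mem_ofPred.1 hg))
  algebraMap_mem' _ := mem_ofPred.2 contDiff_const

/-- Smooth real functions on `ℝⁿ`. -/
abbrev SmoothFun (n : ℕ) : Type := smoothSubalgebra n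

namespace SmoothFun

variable {n : ℕ}

instance : CoeFun (SmoothFun n) fun _ => Euc n → ℝ := ⟨Subtype.val⟩

lemma contDiff (f : SmoothFun n) : ContDiff ℝ (⊤ : ℕ∞) f := f.2

lemma continuous (f : SmoothFun n) : Continuous f := f.contDiff.continuous

lemma differentiable (f : SmoothFun n) : Differentiable ℝ f :=
  f.contDiff.differentiable (by simp)

lemma differentiable_fderiv (f : SmoothFun n) : Differentiable ℝ (fderiv ℝ f) :=
  (f.contDiff.fderiv_right (m := (⊤ : ℕ∞)) (by simp)).differentiable (by simp)

@[simp] lemma add_apply (f g : SmoothFun n) (x : Euc n) : (f + g) x = f x + g x := rfl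

@[simp] lemma sub_apply (f g : SmoothFun n) (x : Euc n) : (f - g) x = f x - g x := rfl

@[simp] lemma mul_apply (f g : SmoothFun n) (x : Euc n) : (f * g) x = f x * g x := rfl

@[simp] lemma pow_apply (f : SmoothFun n) (k : ℕ) (x : Euc n) : (f ^ k) x = f x ^ k := rfl

@[simp] lemma smul_apply (c : ℝ) (f : SmoothFun n) (x : Euc n) : (c • f) x = c * f x := rfl

@[simp] lemma one_apply (x : Euc n) : (1 : SmoothFun n) x = 1 := rfl

@[simp] lemma natCast_apply (k : ℕ) (x : Euc n) : (k : SmoothFun n) x = k := rfl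

@[simp] lemma ofNat_apply (k : ℕ) [k.AtLeastTwo] (x : Euc n) :
    (ofNat(k) : SmoothFun n) x = ofNat(k) := rfl

@[simp] lemma algebraMap_apply (c : ℝ) (x : Euc n) : (algebraMap ℝ (SmoothFun n) c) x = c := rfl

@[simp] lemma sum_apply {ι : Type*} (s : Finset ι) (f : ι → SmoothFun n) (x : Euc n) :
    (∑ i ∈ s, f i) x = ∑ i ∈ s, f i x := by
  rw [← Finset.sum_apply]
  exact congrFun (map_sum (smoothSubalgebra n).val f s) x

/-- The partial derivative `∂ᵢ` as a derivation of the algebra of smooth functions. -/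
def D (i : Fin n) : Derivation ℝ (SmoothFun n) (SmoothFun n) :=
  Derivation.mk'
    { toFun f := ⟨pd i f,
        ContDiff.clm_apply (f.contDiff.fderiv_right (m := (⊤ : ℕ∞)) (by simp)) contDiff_const⟩
      map_add' f g := by
        ext x
        exact congr($(fderiv_add (f.differentiable x) (g.differentiable x)) _)
      map_smul' c f := by
        ext x
        exact congr($(fderiv_const_smul (f.differentiable x) c) _) }
    fun f g => by
      ext x
      exact congr($(fderiv_mul (f.differentiable x) (g.differentiable x)) _)

lemma coe_D (i : Fin n) (f : SmoothFun n) : ⇑(D i f) = pd i f := rfl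

lemma D_D_apply (i j : Fin n) (f : SmoothFun n) (x : Euc n) :
    D i (D j f) x
      = fderiv ℝ (fderiv ℝ f) x (EuclideanSpace.single i 1) (EuclideanSpace.single j 1) := by
  change fderiv ℝ (fun z => fderiv ℝ f z _) x _ = _
  rw [fderiv_clm_apply (f.differentiable_fderiv x) (differentiableAt_const _)]
  simp

lemma D_comm (i j : Fin n) (f : SmoothFun n) : D i (D j f) = D j (D i f) := by
  ext x
  have hf : ContDiffAt ℝ 2 f x := (f.contDiff.of_le (by norm_cast)).contDiffAt
  rw [D_D_apply, D_D_apply]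
  exact hf.isSymmSndFDerivAt (by simp) _ _

/-- The Laplacian `Δf = ∑ ∂ᵢ²f`. -/
def laplacian (f : SmoothFun n) : SmoothFun n := ∑ i, D i (D i f)

lemma coe_laplacian (f : SmoothFun n) : ⇑(laplacian f) = lap f := by
  ext x
  simp only [laplacian, lap, sum_apply, D_D_apply, iteratedFDeriv_two_apply,
    Matrix.cons_val_zero, Matrix.cons_val_one]

/-- The composition `e^f`. -/
def exp (f : SmoothFun n) : SmoothFun n := ⟨fun x => Real.exp (f x), f.contDiff.exp⟩

@[simp] lemma exp_apply (f : SmoothFun n) (x : Euc n) : exp f x = Real.exp (f x) := rfl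

lemma D_exp (i : Fin n) (f : SmoothFun n) : D i (exp f) = exp f * D i f := by
  ext x
  exact congr($(fderiv_exp (f.differentiable x)) _)

/-- The `i`-th coordinate `xᵢ - cᵢ` of the displacement from the point `c`. -/
def disp (c : Euc n) (i : Fin n) : SmoothFun n := ⟨fun x => x i - c i, by
  change ContDiff ℝ (⊤ : ℕ∞) fun x : Euc n => x i - c i
  fun_prop⟩

@[simp] lemma disp_apply (c : Euc n) (i : Fin n) (x : Euc n) : disp c i x = x i - c i := rfl

lemma D_disp (c : Euc n) (i j : Fin n) : D i (disp c j) = if j = i then 1 else 0 := by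
  ext x
  have h : HasFDerivAt (fun x : Euc n => x j - c j) (EuclideanSpace.proj j : Euc n →L[ℝ] ℝ) x :=
    (EuclideanSpace.proj j : Euc n →L[ℝ] ℝ).hasFDerivAt.sub_const (c j)
  change fderiv ℝ (fun x : Euc n => x j - c j) x _ = _
  rw [h.fderiv]
  split_ifs with hij <;> simp [hij]

/-- The derivation `f ↦ ⟨∇f, ∇g⟩`, seen as `g` acting on `f`. -/
def gradInner (g : SmoothFun n) : Derivation ℝ (SmoothFun n) (SmoothFun n) :=
  ∑ i, D i g • D i

/-- The derivation `⟨x - c, ∇⟩` along the radial field centred at `c`. -/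
def radial (c : Euc n) : Derivation ℝ (SmoothFun n) (SmoothFun n) := ∑ i, disp c i • D i

/-- The squared length `|∇f|²` of the gradient. -/
def gradSq (f : SmoothFun n) : SmoothFun n := gradInner f f

lemma gradInner_def (g f : SmoothFun n) : gradInner g f = ∑ i, D i g * D i f :=
  (congrFun (map_sum Derivation.coeFnAddMonoidHom (fun i => D i g • D i) .univ) f).trans
    (Finset.sum_apply _ _ _)

lemma radial_def (c : Euc n) (f : SmoothFun n) : radial c f = ∑ i, disp c i * D i f :=
  (congrFun (map_sum Derivation.coeFnAddMonoidHom (fun i => disp c i • D i) .univ) f).trans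
    (Finset.sum_apply _ _ _)

lemma gradInner_comm (f g : SmoothFun n) : gradInner g f = gradInner f g := by
  simp only [gradInner_def, mul_comm]

lemma gradInner_apply (f g : SmoothFun n) (x : Euc n) :
    gradInner g f x = ∑ i, D i g x * D i f x := by
  simp [gradInner_def]

lemma gradSq_apply (f : SmoothFun n) (x : Euc n) : gradSq f x = ∑ i, D i f x ^ 2 := by
  simp [gradSq, gradInner_apply, pow_two]

lemma gradSq_nonneg (f : SmoothFun n) (x : Euc n) : 0 ≤ gradSq f x := by
  rw [gradSq_apply]
  positivity

lemma sq_D_le_gradSq (f : SmoothFun n) (i : Fin n) (x : Euc n) : D i f x ^ 2 ≤ gradSq f x := by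
  rw [gradSq_apply]
  exact Finset.single_le_sum (f := fun i => D i f x ^ 2) (fun _ _ => sq_nonneg _)
    (Finset.mem_univ i)

lemma sq_gradInner_le (f g : SmoothFun n) (x : Euc n) :
    gradInner g f x ^ 2 ≤ gradSq g x * gradSq f x := by
  rw [gradInner_apply, gradSq_apply, gradSq_apply]
  exact Finset.sum_mul_sq_le_sq_mul_sq _ _ _

lemma sum_D_mul (f : SmoothFun n) (X : Fin n → SmoothFun n) :
    ∑ i, D i (f * X i) = f * ∑ i, D i (X i) + ∑ i, X i * D i f := by
  simp only [Derivation.leibniz, smul_eq_mul, Finset.sum_add_distrib, Finset.mul_sum]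

lemma sum_D_mul_D (f g : SmoothFun n) :
    ∑ i, D i (f * D i g) = f * laplacian g + gradInner g f := by
  rw [sum_D_mul, laplacian, gradInner_def]

lemma laplacian_mul (f g : SmoothFun n) :
    laplacian (f * g) = f * laplacian g + 2 * gradInner f g + g * laplacian f := by
  have hD (i : Fin n) : D i (f * g) = f * D i g + g * D i f := (D i).leibniz f g
  simp only [laplacian, hD, map_add, Finset.sum_add_distrib]
  rw [sum_D_mul_D, sum_D_mul_D, gradInner_comm f g, laplacian, laplacian]
  ring

lemma gradSq_mul_le (f g : SmoothFun n) (x : Euc n) :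
    gradSq (f * g) x ≤ 2 * f x ^ 2 * gradSq g x + 2 * g x ^ 2 * gradSq f x := by
  simp only [gradSq_apply, Derivation.leibniz, smul_eq_mul, add_apply, mul_apply,
    Finset.mul_sum, ← Finset.sum_add_distrib]
  gcongr with i
  nlinarith [sq_nonneg (f x * D i g x - g x * D i f x)]

lemma derivation_ofNat (d : Derivation ℝ (SmoothFun n) (SmoothFun n)) (k : ℕ) [k.AtLeastTwo] :
    d (ofNat(k) : SmoothFun n) = 0 :=
  d.map_natCast k

/-- The constant function `t`. -/
abbrev const (t : ℝ) : SmoothFun n := algebraMap ℝ _ t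

/-- The function `ρ(x) = |x - c|²`. -/
def sqDist (c : Euc n) : SmoothFun n := ∑ j, disp c j ^ 2

/-- The Carleman weight `φ = e^{-2ρ}`, with `ρ` the squared distance to `c`. -/
def weight (c : Euc n) : SmoothFun n := exp (-(2 * sqDist c))

/-- The function `ψ = (16ρ - 4n + 8)φ = Δφ + 8φ`. The conjugated Laplacian is split with `ψ` in
place of `Δφ`, which is what makes the zeroth order terms of the Carleman identity positive. -/
def corrector (c : Euc n) : SmoothFun n := (16 * sqDist c - 4 * n + 8) * weight c

/-- The part `Δw + (t²|∇φ|² + 8tφ)w` of the conjugated Laplacian. -/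
def conjSymm (c : Euc n) (t : ℝ) (w : SmoothFun n) : SmoothFun n :=
  laplacian w + 16 * const t ^ 2 * sqDist c * weight c ^ 2 * w + 8 * const t * weight c * w

/-- The part `-2t⟨∇φ, ∇w⟩ - tψw` of the conjugated Laplacian. -/
def conjSkew (c : Euc n) (t : ℝ) (w : SmoothFun n) : SmoothFun n :=
  const t * (8 * weight c * radial c w - corrector c * w)

/-- The vector field `a∇w + b(x - c) + tw²∇ψ` whose divergence appears in the Carleman identity,
with `a = 16tφ⟨x - c, ∇w⟩ - 2tψw` and `b = -8tφ|∇w|² + 128t³ρφ³w² + 64t²φ²w²`. -/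
def carlemanFlux (c : Euc n) (t : ℝ) (w : SmoothFun n) (i : Fin n) : SmoothFun n :=
  (16 * const t * weight c * radial c w - 2 * const t * corrector c * w) * D i w
    + (-(8 * const t * weight c * gradSq w)
        + 128 * const t ^ 3 * sqDist c * weight c ^ 3 * w ^ 2
        + 64 * const t ^ 2 * weight c ^ 2 * w ^ 2) * disp c i
    + const t * w ^ 2 * D i (corrector c)

lemma D_sqDist (c : Euc n) (i : Fin n) : D i (sqDist c) = 2 * disp c i := by
  simp [sqDist, Derivation.leibniz_pow, D_disp, mul_comm]

lemma D_weight (c : Euc n) (i : Fin n) : D i (weight c) = -(4 * weight c) * disp c i := by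
  simp only [weight, D_exp, map_neg, Derivation.leibniz, smul_eq_mul, derivation_ofNat, D_sqDist]
  ring

lemma radial_sqDist (c : Euc n) : radial c (sqDist c) = 2 * sqDist c := by
  simp only [radial_def, D_sqDist]
  rw [sqDist, Finset.mul_sum]
  exact Finset.sum_congr rfl fun i _ => by ring

lemma radial_weight (c : Euc n) : radial c (weight c) = -(4 * weight c) * sqDist c := by
  simp only [radial_def, D_weight, sqDist, Finset.mul_sum]
  exact Finset.sum_congr rfl fun i _ => by ring

lemma gradInner_weight (c : Euc n) (w : SmoothFun n) :
    gradInner w (weight c) = -(4 * weight c) * radial c w := by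
  simp only [gradInner_def, D_weight, radial_def, Finset.mul_sum]
  exact Finset.sum_congr rfl fun i _ => by ring

lemma sum_D_mul_disp (c : Euc n) (f : SmoothFun n) :
    ∑ i, D i (f * disp c i) = radial c f + n * f := by
  rw [sum_D_mul, radial_def]
  simp [D_disp, mul_comm, add_comm]

lemma D_radial (c : Euc n) (w : SmoothFun n) (i : Fin n) :
    D i (radial c w) = D i w + radial c (D i w) := by
  simp [radial_def, D_disp, D_comm i, Finset.sum_add_distrib, add_comm]

lemma two_mul_gradInner_radial (c : Euc n) (w : SmoothFun n) :
    2 * gradInner w (radial c w) = 2 * gradSq w + radial c (gradSq w) := by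
  simp only [gradSq, gradInner_def, D_radial, map_sum, Derivation.leibniz, smul_eq_mul,
    Finset.mul_sum, ← Finset.sum_add_distrib]
  exact Finset.sum_congr rfl fun i _ => by ring

lemma sum_D_carlemanFlux (c : Euc n) (t : ℝ) (w : SmoothFun n) :
    ∑ i, D i (carlemanFlux c t w i)
      = (16 * const t * weight c * radial c w - 2 * const t * corrector c * w) * laplacian w
        + 16 * const t * weight c * (gradInner w (radial c w) - 4 * radial c w ^ 2)
        - 2 * const t * corrector c * gradSq w
        - 8 * const t * weight c
          * (radial c (gradSq w) + ((n : SmoothFun n) - 4 * sqDist c) * gradSq w)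
        + 128 * const t ^ 3 * weight c ^ 3
          * (2 * sqDist c * w * radial c w
            + (2 + (n : SmoothFun n) - 12 * sqDist c) * sqDist c * w ^ 2)
        + 64 * const t ^ 2 * weight c ^ 2
          * (2 * w * radial c w + ((n : SmoothFun n) - 8 * sqDist c) * w ^ 2)
        + const t * w ^ 2 * laplacian (corrector c) := by
  simp only [carlemanFlux, map_add, Finset.sum_add_distrib]
  rw [sum_D_mul_D, sum_D_mul_disp, sum_D_mul_D]
  simp only [map_add, map_sub, map_neg, Derivation.leibniz, Derivation.leibniz_pow, smul_eq_mul,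
    nsmul_eq_mul, derivation_ofNat, Derivation.map_algebraMap, radial_sqDist, radial_weight,
    gradInner_weight, gradInner_comm w (corrector c), ← gradSq.eq_1 w]
  push_cast
  ring

lemma two_mul_conjSymm_mul_conjSkew (c : Euc n) (t : ℝ) (w : SmoothFun n) :
    2 * (conjSymm c t w * conjSkew c t w) = ∑ i, D i (carlemanFlux c t w i)
      + 64 * const t * weight c * radial c w ^ 2
      + 512 * const t ^ 3 * weight c ^ 3 * sqDist c * (2 * sqDist c - 1) * w ^ 2
      + 128 * const t ^ 2 * weight c ^ 2 * (2 * sqDist c - 1) * w ^ 2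
      - const t * w ^ 2 * laplacian (corrector c) := by
  rw [sum_D_carlemanFlux, conjSymm, conjSkew]
  generalize laplacian (corrector c) = Δψ
  unfold corrector
  linear_combination (-8 * const t * weight c) * two_mul_gradInner_radial c w

/-- The exponential `e^{tφ}` of the Carleman weight. -/
def expWeight (c : Euc n) (t : ℝ) : SmoothFun n := exp (const t * weight c)

lemma D_expWeight (c : Euc n) (t : ℝ) (i : Fin n) :
    D i (expWeight c t) = -(4 * const t * weight c * expWeight c t) * disp c i := by
  rw [expWeight, D_exp]
  simp only [Derivation.leibniz, smul_eq_mul, Derivation.map_algebraMap, D_weight]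
  ring

lemma radial_expWeight (c : Euc n) (t : ℝ) :
    radial c (expWeight c t) = -(4 * const t * weight c * expWeight c t) * sqDist c := by
  simp only [radial_def, D_expWeight, sqDist, Finset.mul_sum]
  exact Finset.sum_congr rfl fun i _ => by ring

lemma gradInner_expWeight (c : Euc n) (t : ℝ) (v : SmoothFun n) :
    gradInner (expWeight c t) v = -(4 * const t * weight c * expWeight c t) * radial c v := by
  simp only [gradInner_def, D_expWeight, radial_def, Finset.mul_sum]
  exact Finset.sum_congr rfl fun i _ => by ring

lemma gradSq_expWeight (c : Euc n) (t : ℝ) :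
    gradSq (expWeight c t)
      = 16 * const t ^ 2 * weight c ^ 2 * sqDist c * expWeight c t ^ 2 := by
  rw [gradSq, gradInner_expWeight, radial_expWeight]
  ring

lemma laplacian_expWeight (c : Euc n) (t : ℝ) :
    laplacian (expWeight c t)
      = 4 * const t * weight c * expWeight c t
        * (4 * (1 + const t * weight c) * sqDist c - (n : SmoothFun n)) := by
  simp only [laplacian, D_expWeight]
  rw [sum_D_mul_disp]
  simp only [map_neg, Derivation.leibniz, smul_eq_mul, derivation_ofNat,
    Derivation.map_algebraMap, radial_weight, radial_expWeight]
  ring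

lemma conjSymm_add_conjSkew (c : Euc n) (t : ℝ) (v : SmoothFun n) :
    conjSymm c t (expWeight c t * v) + conjSkew c t (expWeight c t * v)
      = expWeight c t * laplacian v := by
  rw [conjSymm, conjSkew, laplacian_mul, laplacian_expWeight, gradInner_expWeight, corrector,
    Derivation.leibniz, radial_expWeight, smul_eq_mul, smul_eq_mul]
  ring

end SmoothFun

/-- The open half space `{x ∈ ℝᵐ⁺¹ : x_{m+1} > 0}`. -/
def halfSpace (m : ℕ) : Set (Euc (m + 1)) := {x | 0 < x (Fin.last m)}

/-- The inclusion `incl` of the hyperplane `{x_{m+1} = 0}`, with domain `ℝᵐ` instead of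
`ℝ⁽ᵐ⁺¹⁾⁻¹`. -/
def hyperplane {m : ℕ} (y : Euc m) : Euc (m + 1) := incl (m + 1) y

/-- The line in direction `eᵢ` through the point of the hyperplane `{xᵢ = 0}` whose remaining
coordinates are those of `p`, parametrized by its `i`-th coordinate `s`. -/
def coordLine {m : ℕ} (i : Fin (m + 1)) (p : Euc m) (s : ℝ) : Euc (m + 1) :=
  WithLp.toLp 2 (i.insertNth s p)

lemma integral_deriv_eq_zero_of_hasCompactSupport {g : ℝ → ℝ} (hg : ContDiff ℝ 1 g)
    (hc : HasCompactSupport g) : ∫ s, deriv g s = 0 :=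
  integral_eq_zero_of_hasDerivAt_of_integrable
    (fun s => (hg.differentiable one_ne_zero s).hasDerivAt)
    ((hg.continuous_deriv le_rfl).integrable_of_hasCompactSupport hc.deriv)
    (hg.continuous.integrable_of_hasCompactSupport hc)

section Fubini

variable {m : ℕ}

lemma mem_halfSpace {x : Euc (m + 1)} : x ∈ halfSpace m ↔ 0 < x (Fin.last m) := Iff.rfl

lemma isOpen_halfSpace : IsOpen (halfSpace m) :=
  isOpen_lt continuous_const (by fun_prop : Continuous fun x : Euc (m + 1) => x (Fin.last m))

lemma measurableSet_halfSpace : MeasurableSet (halfSpace m) := isOpen_halfSpace.measurableSet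

@[simp] lemma hyperplane_last (y : Euc m) : hyperplane y (Fin.last m) = 0 := by
  simp [hyperplane, incl]

@[simp] lemma hyperplane_castSucc (y : Euc m) (i : Fin m) : hyperplane y i.castSucc = y i := by
  simp [hyperplane, incl]

lemma norm_hyperplane (y : Euc m) : ‖hyperplane y‖ = ‖y‖ := by
  simp [EuclideanSpace.norm_eq, Fin.sum_univ_castSucc]

lemma isometry_hyperplane : Isometry (hyperplane : Euc m → Euc (m + 1)) :=
  Isometry.of_dist_eq fun y z => by simp [EuclideanSpace.dist_eq, Fin.sum_univ_castSucc]

@[simp] lemma coordLine_apply_self (i : Fin (m + 1)) (p : Euc m) (s : ℝ) :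
    coordLine i p s i = s := by
  simp [coordLine]

@[simp] lemma coordLine_apply_succAbove (i : Fin (m + 1)) (p : Euc m) (s : ℝ) (j : Fin m) :
    coordLine i p s (i.succAbove j) = p j := by
  simp [coordLine]

lemma coordLine_last_zero (p : Euc m) : coordLine (Fin.last m) p 0 = hyperplane p := by
  ext j
  refine Fin.lastCases ?_ (fun j => ?_) j
  · simp
  · rw [← Fin.succAbove_last_apply, coordLine_apply_succAbove, Fin.succAbove_last_apply,
      hyperplane_castSucc]

lemma coordLine_eq_add_smul (i : Fin (m + 1)) (p : Euc m) (s : ℝ) :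
    coordLine i p s = coordLine i p 0 + s • EuclideanSpace.single i 1 := by
  ext j
  rcases Fin.eq_self_or_eq_succAbove i j with rfl | ⟨j, rfl⟩ <;> simp

lemma hasDerivAt_coordLine (i : Fin (m + 1)) (p : Euc m) (s : ℝ) :
    HasDerivAt (coordLine i p) (EuclideanSpace.single i 1) s := by
  rw [funext (coordLine_eq_add_smul i p)]
  simpa using ((hasDerivAt_id s).smul_const (EuclideanSpace.single i (1 : ℝ))).const_add
    (coordLine i p 0)

lemma contDiff_coordLine (i : Fin (m + 1)) (p : Euc m) : ContDiff ℝ 1 (coordLine i p) := by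
  rw [funext (coordLine_eq_add_smul i p)]
  fun_prop

lemma isometry_coordLine (i : Fin (m + 1)) (p : Euc m) : Isometry (coordLine i p) := by
  refine Isometry.of_dist_eq fun s t => ?_
  rw [coordLine_eq_add_smul, coordLine_eq_add_smul i p t, dist_add_left, dist_eq_norm, ← sub_smul,
    norm_smul, PiLp.norm_single, norm_one, mul_one, dist_eq_norm]

lemma integral_eq_integral_coordLine (i : Fin (m + 1)) {g : Euc (m + 1) → ℝ}
    (hg : Integrable g) : ∫ x, g x = ∫ p : Euc m, ∫ s : ℝ, g (coordLine i p s) := by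
  let e : ℝ × Euc m ≃ᵐ Euc (m + 1) :=
    ((MeasurableEquiv.refl ℝ).prodCongr (MeasurableEquiv.toLp 2 (Fin m → ℝ)).symm).trans
      ((MeasurableEquiv.piFinSuccAbove (fun _ => ℝ) i).symm.trans (MeasurableEquiv.toLp 2 _))
  have he : MeasurePreserving e :=
    (PiLp.volume_preserving_toLp _).comp
      ((volume_preserving_piFinSuccAbove (fun _ => ℝ) i).symm.comp
        ((MeasurePreserving.id volume).prod (PiLp.volume_preserving_ofLp _)))
  rw [← he.integral_comp' g]
  exact integral_prod_symm (fun z => g (e z)) ((he.integrable_comp_emb e.measurableEmbedding).2 hg)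

end Fubini

namespace SmoothFun

variable {m : ℕ}

lemma integrable_of_hasCompactSupport {n : ℕ} {f : SmoothFun n} (hf : HasCompactSupport f) :
    Integrable f :=
  f.continuous.integrable_of_hasCompactSupport hf

lemma hasCompactSupport_D {n : ℕ} {f : SmoothFun n} (hf : HasCompactSupport f) (i : Fin n) :
    HasCompactSupport (D i f) :=
  (hf.fderiv ℝ).comp_left (g := fun L : Euc n →L[ℝ] ℝ => L (EuclideanSpace.single i 1)) rfl

lemma deriv_comp_coordLine (f : SmoothFun (m + 1)) (i : Fin (m + 1)) (p : Euc m) (s : ℝ) :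
    deriv (f ∘ coordLine i p) s = D i f (coordLine i p s) :=
  ((f.differentiable _).hasFDerivAt.comp_hasDerivAt s (hasDerivAt_coordLine i p s)).deriv

variable {f : SmoothFun (m + 1)}

lemma setIntegral_halfSpace_D_castSucc (hf : HasCompactSupport f) (i : Fin m) :
    ∫ x in halfSpace m, D i.castSucc f x = 0 := by
  have hint := integrable_of_hasCompactSupport (hasCompactSupport_D hf i.castSucc)
  rw [← integral_indicator measurableSet_halfSpace,
    integral_eq_integral_coordLine i.castSucc (hint.indicator measurableSet_halfSpace)]
  refine integral_eq_zero_of_ae (.of_forall fun p => ?_)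
  obtain ⟨j, hj⟩ := Fin.exists_succAbove_eq (Fin.castSucc_lt_last i).ne'
  by_cases hp : 0 < p j
  · have hmem (s : ℝ) : coordLine i.castSucc p s ∈ halfSpace m := by
      rwa [mem_halfSpace, ← hj, coordLine_apply_succAbove]
    simp only [indicator_of_mem (hmem _), ← deriv_comp_coordLine]
    exact integral_deriv_eq_zero_of_hasCompactSupport
      ((f.contDiff.of_le (by norm_cast)).comp (contDiff_coordLine _ p))
      (hf.comp_isClosedEmbedding (isometry_coordLine _ p).isClosedEmbedding)
  · have hmem (s : ℝ) : coordLine i.castSucc p s ∉ halfSpace m := by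
      rwa [mem_halfSpace, ← hj, coordLine_apply_succAbove]
    simp [indicator_of_notMem (hmem _)]

lemma setIntegral_halfSpace_D_last (hf : HasCompactSupport f) :
    ∫ x in halfSpace m, D (Fin.last m) f x = -∫ y, f (hyperplane y) := by
  have hint := integrable_of_hasCompactSupport (hasCompactSupport_D hf (Fin.last m))
  rw [← integral_indicator measurableSet_halfSpace,
    integral_eq_integral_coordLine (Fin.last m) (hint.indicator measurableSet_halfSpace),
    ← integral_neg]
  congr! 2 with p
  have hind (s : ℝ) : (halfSpace m).indicator (D (Fin.last m) f) (coordLine (Fin.last m) p s)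
      = (Ioi 0).indicator (deriv (f ∘ coordLine (Fin.last m) p)) s := by
    by_cases hs : 0 < s <;> simp [indicator, mem_halfSpace, hs, deriv_comp_coordLine]
  simp only [hind]
  rw [integral_indicator measurableSet_Ioi, HasCompactSupport.integral_Ioi_deriv_eq
    ((f.contDiff.of_le (by norm_cast)).comp (contDiff_coordLine _ p))
    (hf.comp_isClosedEmbedding (isometry_coordLine _ p).isClosedEmbedding), ← coordLine_last_zero]
  rfl

theorem setIntegral_halfSpace_sum_D {F : Fin (m + 1) → SmoothFun (m + 1)}
    (hF : ∀ i, HasCompactSupport (F i)) :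
    ∫ x in halfSpace m, (∑ i, D i (F i)) x = -∫ y, F (Fin.last m) (hyperplane y) := by
  simp only [sum_apply]
  rw [integral_finsetSum _ fun i _ =>
      (integrable_of_hasCompactSupport (hasCompactSupport_D (hF i) i)).integrableOn,
    Fin.sum_univ_castSucc, setIntegral_halfSpace_D_last (hF _)]
  simp [setIntegral_halfSpace_D_castSucc (hF _)]

end SmoothFun

lemma foldr_iterate_update_of_notMem {ι X : Type*} [DecidableEq ι] (g : ι → X → X) (α : ι → ℕ)
    (x : X) (i : ι) (k : ℕ) {l : List ι} (hi : i ∉ l) :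
    l.foldr (fun j => (g j)^[Function.update α i k j]) x = l.foldr (fun j => (g j)^[α j]) x := by
  induction l with
  | nil => rfl
  | cons a l ih =>
    rw [List.mem_cons, not_or] at hi
    rw [List.foldr_cons, List.foldr_cons, ih hi.2, Function.update_of_ne (Ne.symm hi.1)]

lemma apply_foldr_iterate_of_commute {ι X : Type*} [DecidableEq ι] {g : ι → X → X}
    (hg : ∀ i j, Function.Commute (g i) (g j)) (α : ι → ℕ) (x : X) {i : ι} {l : List ι}
    (hl : l.Nodup) (hi : i ∈ l) :
    g i (l.foldr (fun j => (g j)^[α j]) x)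
      = l.foldr (fun j => (g j)^[Function.update α i (α i + 1) j]) x := by
  induction l with
  | nil => simp at hi
  | cons a l ih =>
    rw [List.nodup_cons] at hl
    rw [List.foldr_cons, List.foldr_cons]
    rcases List.mem_cons.1 hi with rfl | hi
    · rw [foldr_iterate_update_of_notMem g α x _ _ hl.1, Function.update_self,
        Function.iterate_succ_apply']
    · have hia : a ≠ i := fun h => hl.1 (h ▸ hi)
      rw [Function.update_of_ne hia, ← ih hl.2 hi, (hg i a).iterate_right (α a)]

lemma contDiff_hyperplane {m : ℕ} : ContDiff ℝ (⊤ : ℕ∞) (hyperplane : Euc m → Euc (m + 1)) := by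
  rw [contDiff_euclidean]
  refine Fin.lastCases ?_ fun i => ?_
  · simpa only [hyperplane_last] using contDiff_const
  · simp only [hyperplane_castSucc]
    fun_prop

lemma hyperplane_add_smul {m : ℕ} (y : Euc m) (i : Fin m) (s : ℝ) :
    hyperplane (y + s • EuclideanSpace.single i 1)
      = hyperplane y + s • EuclideanSpace.single i.castSucc 1 := by
  ext k
  refine Fin.lastCases ?_ (fun j => ?_) k <;> simp

namespace SmoothFun

section CauchyData

variable {m : ℕ}

/-- The restriction of `f` to the boundary hyperplane. -/
def trace (f : SmoothFun (m + 1)) : SmoothFun m :=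
  ⟨fun y => f (hyperplane y), f.contDiff.comp contDiff_hyperplane⟩

lemma trace_apply (f : SmoothFun (m + 1)) (y : Euc m) : trace f y = f (hyperplane y) := rfl

lemma trace_D_castSucc (f : SmoothFun (m + 1)) (i : Fin m) :
    trace (D i.castSucc f) = D i (trace f) := by
  ext y
  change fderiv ℝ f (hyperplane y) _ = fderiv ℝ (trace f) y _
  rw [← (f.differentiable _).lineDeriv_eq_fderiv,
    ← ((trace f).differentiable y).lineDeriv_eq_fderiv]
  simp only [lineDeriv, trace_apply, hyperplane_add_smul]

/-- The multi-index derivative `∂^α f`. -/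
def iterD (α : Fin m → ℕ) (f : SmoothFun m) : SmoothFun m :=
  (List.finRange m).foldr (fun i => (D i)^[α i]) f

lemma coe_iterate_D (i : Fin m) (k : ℕ) (f : SmoothFun m) : ⇑((D i)^[k] f) = (pd i)^[k] f := by
  induction k with
  | zero => rfl
  | succ k ih => rw [Function.iterate_succ_apply', Function.iterate_succ_apply', coe_D, ih]

lemma coe_iterD (α : Fin m → ℕ) (f : SmoothFun m) : ⇑(iterD α f) = mpd α f := by
  unfold iterD mpd
  induction List.finRange m with
  | nil => rfl
  | cons a l ih => rw [List.foldr_cons, List.foldr_cons, coe_iterate_D, ih]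

lemma iterD_zero (f : SmoothFun m) : iterD 0 f = f := by
  unfold iterD
  induction List.finRange m with
  | nil => rfl
  | cons a l ih => rwa [List.foldr_cons]

lemma D_iterD (i : Fin m) (α : Fin m → ℕ) (f : SmoothFun m) :
    D i (iterD α f) = iterD (Function.update α i (α i + 1)) f :=
  apply_foldr_iterate_of_commute (g := fun i => (D i : SmoothFun m → SmoothFun m)) D_comm α f
    (List.nodup_finRange m) (List.mem_finRange i)

lemma D_foldr_D (i : Fin m) (l : List (Fin m)) (f : SmoothFun m) :
    D i (l.foldr (fun j => D j) f) = l.foldr (fun j => D j) (D i f) := by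
  induction l with
  | nil => rfl
  | cons a l ih => rw [List.foldr_cons, List.foldr_cons, D_comm, ih]

lemma exists_trace_foldr_D_eq_iterD (l : List (Fin (m + 1))) (f : SmoothFun (m + 1)) :
    ∃ (α : Fin m → ℕ) (j : ℕ), ∑ i, α i + j = l.length ∧
      trace (l.foldr (fun i => D i) f) = iterD α (trace ((D (Fin.last m))^[j] f)) := by
  induction l generalizing f with
  | nil => exact ⟨0, 0, by simp, (iterD_zero _).symm⟩
  | cons a l ih =>
    rw [List.foldr_cons]
    induction a using Fin.lastCases with
    | last =>
      obtain ⟨α, j, hlen, htrace⟩ := ih (D (Fin.last m) f)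
      refine ⟨α, j + 1, by rw [List.length_cons, ← hlen, add_assoc], ?_⟩
      rw [D_foldr_D, htrace, Function.iterate_succ_apply]
    | cast i =>
      obtain ⟨α, j, hlen, htrace⟩ := ih f
      refine ⟨Function.update α i (α i + 1), j, ?_, by rw [trace_D_castSucc, htrace, D_iterD]⟩
      rw [List.length_cons, ← hlen, Finset.sum_update_of_mem (Finset.mem_univ i),
        Finset.sum_eq_add_sum_sdiff_singleton_of_mem (Finset.mem_univ i) α]
      ring

/-- The squared norm `‖f‖²` in `L²` of the boundary disc of radius `2`. -/
def bdryNormSq (f : SmoothFun (m + 1)) : ℝ := ∫ y in ball (0 : Euc m) 2, f (hyperplane y) ^ 2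

/-- The size `∑ ‖∂ⱼf‖_{H^{3-j}}`, `j ≤ 3`, of the Cauchy data on the boundary disc of radius `2`,
where `∂ⱼ` is the `j`-th normal derivative. -/
def cauchyData (f : Euc (m + 1) → ℝ) : ℝ :=
  ∑ j ∈ Finset.range 4, √(bdryHnormSq (m + 1) (3 - j) 2 ((pd (Fin.last m))^[j] f))

lemma cauchyData_nonneg (f : Euc (m + 1) → ℝ) : 0 ≤ cauchyData f := by
  unfold cauchyData
  positivity

lemma bdryHnormSq_le_cauchyData_sq (f : Euc (m + 1) → ℝ) {j : ℕ} (hj : j < 4) :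
    bdryHnormSq (m + 1) (3 - j) 2 ((pd (Fin.last m))^[j] f) ≤ cauchyData f ^ 2 := by
  rw [← Real.sqrt_le_left (cauchyData_nonneg f)]
  exact Finset.single_le_sum
    (f := fun j => √(bdryHnormSq (m + 1) (3 - j) 2 ((pd (Fin.last m))^[j] f)))
    (fun _ _ => Real.sqrt_nonneg _) (Finset.mem_range.2 hj)

lemma integral_sq_iterD_trace_le (f : SmoothFun (m + 1)) {α : Fin m → ℕ} {k : ℕ}
    (hα : ∑ i, α i ≤ k) :
    ∫ y in ball (0 : Euc m) 2, iterD α (trace f) y ^ 2 ≤ bdryHnormSq (m + 1) k 2 f := by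
  have hlt (i : Fin m) : α i < k + 1 :=
    Nat.lt_succ_of_le ((Finset.single_le_sum_of_canonicallyOrdered (Finset.mem_univ i)).trans hα)
  have hterm := Finset.single_le_sum (s := .univ) (f := fun β : Fin m → Fin (k + 1) =>
    if (∑ i, (β i : ℕ)) ≤ k then ∫ y in ball (0 : Euc m) 2,
      mpd (fun i => (β i : ℕ)) (fun z => f (hyperplane z)) y ^ 2 else 0)
    (fun β _ => by split_ifs; exacts [integral_nonneg fun _ => sq_nonneg _, le_rfl])
    (Finset.mem_univ fun i => ⟨α i, hlt i⟩)
  rw [if_pos hα] at hterm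
  rw [coe_iterD]
  exact hterm

lemma bdryNormSq_foldr_D_le (f : SmoothFun (m + 1)) {l : List (Fin (m + 1))} (hl : l.length ≤ 3) :
    bdryNormSq (l.foldr (fun i => D i) f) ≤ cauchyData f ^ 2 := by
  obtain ⟨α, j, hlen, htrace⟩ := exists_trace_foldr_D_eq_iterD l f
  calc bdryNormSq (l.foldr (fun i => D i) f)
      = ∫ y in ball (0 : Euc m) 2, iterD α (trace ((D (Fin.last m))^[j] f)) y ^ 2 := by
        simp only [← htrace, trace_apply, bdryNormSq]
    _ ≤ bdryHnormSq (m + 1) (3 - j) 2 ((D (Fin.last m))^[j] f) :=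
        integral_sq_iterD_trace_le _ (by omega)
    _ ≤ cauchyData f ^ 2 := by
        rw [coe_iterate_D]
        exact bdryHnormSq_le_cauchyData_sq f (by omega)

lemma integrableOn_ball_comp_hyperplane {g : Euc (m + 1) → ℝ} (hg : Continuous g) (R : ℝ) :
    IntegrableOn (fun y => g (hyperplane y)) (ball (0 : Euc m) R) :=
  ((hg.comp contDiff_hyperplane.continuous).continuousOn.integrableOn_compact
    (isCompact_closedBall 0 R)).mono_set ball_subset_closedBall

lemma bdryNormSq_sum_le {ι : Type*} [Fintype ι] {f : ι → SmoothFun (m + 1)} {B : ℝ}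
    (hf : ∀ i, bdryNormSq (f i) ≤ B) : bdryNormSq (∑ i, f i) ≤ (Fintype.card ι : ℝ) ^ 2 * B := by
  have hint (i : ι) : IntegrableOn (fun y => f i (hyperplane y) ^ 2) (ball (0 : Euc m) 2) :=
    integrableOn_ball_comp_hyperplane ((f i).continuous.pow 2) 2
  calc bdryNormSq (∑ i, f i)
      ≤ ∫ y in ball (0 : Euc m) 2, Fintype.card ι * ∑ i, f i (hyperplane y) ^ 2 := by
        refine setIntegral_mono (integrableOn_ball_comp_hyperplane ((∑ i, f i).continuous.pow 2) 2)
          ((integrable_finsetSum _ fun i _ => hint i).const_mul _) fun y => ?_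
        simpa using sq_sum_le_card_mul_sum_sq (s := .univ) (f := fun i => f i (hyperplane y))
    _ = Fintype.card ι * ∑ i, bdryNormSq (f i) := by
        rw [integral_const_mul, integral_finsetSum _ fun i _ => hint i]
        rfl
    _ ≤ Fintype.card ι * ∑ _i : ι, B := by gcongr with i; exact hf i
    _ = (Fintype.card ι : ℝ) ^ 2 * B := by simp [pow_two, mul_assoc]

lemma bdryNormSq_laplacian_le (f : SmoothFun (m + 1)) :
    bdryNormSq (laplacian f) ≤ (m + 1) ^ 2 * cauchyData f ^ 2 := by
  have h := bdryNormSq_sum_le fun i => bdryNormSq_foldr_D_le f (l := [i, i]) (by simp)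
  simpa [laplacian] using h

lemma bdryNormSq_D_laplacian_le (f : SmoothFun (m + 1)) (k : Fin (m + 1)) :
    bdryNormSq (D k (laplacian f)) ≤ (m + 1) ^ 2 * cauchyData f ^ 2 := by
  have h := bdryNormSq_sum_le fun i => bdryNormSq_foldr_D_le f (l := [k, i, i]) (by simp)
  simpa [laplacian] using h

end CauchyData

section Support

variable {n : ℕ} {K : Set (Euc n)} {f : SmoothFun n}

/-- The ideal of smooth functions vanishing outside `K`. -/
def supportedIn (K : Set (Euc n)) : Ideal (SmoothFun n) where
  carrier := {f | ∀ x ∉ K, f x = 0}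
  add_mem' hf hg x hx := by simp [hf x hx, hg x hx]
  zero_mem' _ _ := rfl
  smul_mem' g f hf x hx := by simp [hf x hx]

lemma supportedIn_mono {K' : Set (Euc n)} (h : K ⊆ K') : supportedIn K ≤ supportedIn K' :=
  fun _ hf x hx => hf x fun hxK => hx (h hxK)

lemma D_mem_supportedIn (hK : IsClosed K) (hf : f ∈ supportedIn K) (i : Fin n) :
    D i f ∈ supportedIn K := by
  intro x hx
  have hzero : f =ᶠ[nhds x] fun _ => 0 := Filter.eventually_of_mem (hK.isOpen_compl.mem_nhds hx) hf
  change fderiv ℝ f x _ = 0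
  rw [hzero.fderiv_eq]
  simp

lemma laplacian_mem_supportedIn (hK : IsClosed K) (hf : f ∈ supportedIn K) :
    laplacian f ∈ supportedIn K :=
  Ideal.sum_mem _ fun i _ => D_mem_supportedIn hK (D_mem_supportedIn hK hf i) i

lemma gradInner_mem_supportedIn (hK : IsClosed K) (hf : f ∈ supportedIn K) (g : SmoothFun n) :
    gradInner g f ∈ supportedIn K := by
  rw [gradInner_def]
  exact Ideal.sum_mem _ fun i _ => Ideal.mul_mem_left _ _ (D_mem_supportedIn hK hf i)

lemma sum_D_mem_supportedIn (hK : IsClosed K) {F : Fin n → SmoothFun n}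
    (hF : ∀ i, F i ∈ supportedIn K) : ∑ i, D i (F i) ∈ supportedIn K :=
  Ideal.sum_mem _ fun i _ => D_mem_supportedIn hK (hF i) i

lemma hasCompactSupport_of_mem_supportedIn (hK : IsCompact K) (hf : f ∈ supportedIn K) :
    HasCompactSupport f :=
  HasCompactSupport.intro hK hf

lemma integrable_of_mem_supportedIn (hK : IsCompact K) (hf : f ∈ supportedIn K) : Integrable f :=
  integrable_of_hasCompactSupport (hasCompactSupport_of_mem_supportedIn hK hf)

lemma exists_abs_le_of_isCompact (hK : IsCompact K) (f : SmoothFun n) :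
    ∃ C, 0 ≤ C ∧ ∀ x ∈ K, |f x| ≤ C := by
  obtain ⟨C, hC⟩ := hK.exists_bound_of_continuousOn f.continuous.continuousOn
  exact ⟨max C 0, le_max_right _ _, fun x hx => (hC x hx).trans (le_max_left _ _)⟩

lemma integrable_comp_hyperplane_of_mem_supportedIn {m : ℕ} {K : Set (Euc (m + 1))}
    {f : SmoothFun (m + 1)} (hK : IsCompact K) (hf : f ∈ supportedIn K) :
    Integrable fun y => f (hyperplane y) :=
  (f.continuous.comp contDiff_hyperplane.continuous).integrable_of_hasCompactSupport
    ((hasCompactSupport_of_mem_supportedIn hK hf).comp_isClosedEmbedding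
      isometry_hyperplane.isClosedEmbedding)

end Support

section Cutoff

variable {n : ℕ} (c : Euc n) {a b : ℝ}

lemma sqDist_apply (x : Euc n) : sqDist c x = ‖x - c‖ ^ 2 := by
  simp [sqDist, EuclideanSpace.norm_sq_eq]

lemma sqDist_nonneg (x : Euc n) : 0 ≤ sqDist c x := by
  rw [sqDist_apply]
  positivity

lemma weight_pos (x : Euc n) : 0 < weight c x := Real.exp_pos _

lemma weight_le_one (x : Euc n) : weight c x ≤ 1 := by
  simp [weight, sqDist_apply]

/-- The closed ball `{ρ ≤ r}` around `c`, indexed by its squared radius. -/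
def sqBall (r : ℝ) : Set (Euc n) := {x | sqDist c x ≤ r}

/-- The closed shell `{a ≤ ρ ≤ b}` around `c`, indexed by its squared radii. -/
def shell (a b : ℝ) : Set (Euc n) := {x | a ≤ sqDist c x ∧ sqDist c x ≤ b}

lemma isCompact_sqBall (r : ℝ) : IsCompact (sqBall c r) := by
  refine (isCompact_closedBall c (√r)).of_isClosed_subset
    (isClosed_le (sqDist c).continuous continuous_const) fun x hx => ?_
  rw [mem_closedBall_iff_norm]
  exact Real.le_sqrt_of_sq_le ((sqDist_apply c x).symm.trans_le hx)

lemma isClosed_shell : IsClosed (shell c a b) :=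
  (isClosed_le continuous_const (sqDist c).continuous).inter
    (isClosed_le (sqDist c).continuous continuous_const)

/-- A smooth cutoff function which for `a < b` is equal to `1` where `ρ ≤ a` and to `0` where
`ρ ≥ b`. -/
def cutoff (a b : ℝ) : SmoothFun n :=
  ⟨fun x => Real.smoothTransition ((b - sqDist c x) / (b - a)),
    Real.smoothTransition.contDiff.comp
      ((contDiff_const.sub (sqDist c).contDiff).div_const _)⟩

variable {c}

lemma cutoff_nonneg (x : Euc n) : 0 ≤ cutoff c a b x := Real.smoothTransition.nonneg _

lemma cutoff_le_one (x : Euc n) : cutoff c a b x ≤ 1 := Real.smoothTransition.le_one _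

lemma cutoff_eq_one (hab : a < b) {x : Euc n} (hx : sqDist c x ≤ a) : cutoff c a b x = 1 :=
  Real.smoothTransition.one_of_one_le ((one_le_div (sub_pos.2 hab)).2 (by linarith))

lemma cutoff_mem_supportedIn (hab : a < b) : cutoff c a b ∈ supportedIn (sqBall c b) := by
  intro x hx
  have hbx : b < sqDist c x := lt_of_not_ge hx
  exact Real.smoothTransition.zero_of_nonpos
    (div_nonpos_of_nonpos_of_nonneg (by linarith) (by linarith))

lemma D_cutoff_mem_supportedIn (hab : a < b) (i : Fin n) :
    D i (cutoff c a b) ∈ supportedIn (shell c a b) := by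
  have hin : 1 - cutoff c a b ∈ supportedIn {x | a ≤ sqDist c x} := fun x hx => by
    simp [cutoff_eq_one hab (lt_of_not_ge hx).le]
  have hDin := D_mem_supportedIn (isClosed_le continuous_const (sqDist c).continuous) hin i
  have hDout := D_mem_supportedIn (isCompact_sqBall c b).isClosed (cutoff_mem_supportedIn hab) i
  rw [map_sub, Derivation.map_one_eq_zero, zero_sub, neg_mem_iff] at hDin
  intro x hx
  rcases not_and_or.1 hx with hx | hx
  exacts [hDin x hx, hDout x hx]

lemma laplacian_cutoff_mem_supportedIn (hab : a < b) :
    laplacian (cutoff c a b) ∈ supportedIn (shell c a b) :=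
  sum_D_mem_supportedIn (isClosed_shell c) (D_cutoff_mem_supportedIn hab)

end Cutoff

section Pole

variable {m : ℕ}

/-- The centre `-e_{m+1}` of the Carleman weight. It lies below the half space, at distance `1`
from the boundary, so that `ρ ≥ 1` on the half space. -/
def pole (m : ℕ) : Euc (m + 1) := EuclideanSpace.single (Fin.last m) (-1)

lemma sqDist_pole_apply (x : Euc (m + 1)) :
    sqDist (pole m) x = ‖x‖ ^ 2 + 2 * x (Fin.last m) + 1 := by
  rw [sqDist_apply, norm_sub_sq_real]
  simp [pole, EuclideanSpace.inner_single_right]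

lemma one_le_sqDist_pole {x : Euc (m + 1)} (hx : 0 ≤ x (Fin.last m)) : 1 ≤ sqDist (pole m) x := by
  rw [sqDist_pole_apply]
  nlinarith [sq_nonneg ‖x‖]

lemma sqDist_pole_lt_four {x : Euc (m + 1)} (hx : ‖x‖ < 1) : sqDist (pole m) x < 4 := by
  have hlast : x (Fin.last m) ≤ ‖x‖ := (le_abs_self _).trans (PiLp.norm_apply_le x (Fin.last m))
  rw [sqDist_pole_apply]
  nlinarith [norm_nonneg x]

lemma norm_lt_two_of_sqDist_pole_le {x : Euc (m + 1)} (hx : 0 ≤ x (Fin.last m))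
    (h : sqDist (pole m) x ≤ 19 / 4) : ‖x‖ < 2 := by
  rw [sqDist_pole_apply] at h
  nlinarith

end Pole

section Carleman

variable {m : ℕ} {K : Set (Euc (m + 1))}

/-- The density `f² + |∇f|²` of the `H¹` norm. -/
def energyDensity {n : ℕ} (f : SmoothFun n) : SmoothFun n := f ^ 2 + gradSq f

lemma energyDensity_apply {n : ℕ} (f : SmoothFun n) (x : Euc n) :
    energyDensity f x = f x ^ 2 + gradSq f x := rfl

lemma energyDensity_nonneg {n : ℕ} (f : SmoothFun n) (x : Euc n) : 0 ≤ energyDensity f x :=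
  add_nonneg (sq_nonneg _) (gradSq_nonneg f x)

lemma energyDensity_mem_supportedIn {n : ℕ} {K : Set (Euc n)} {f : SmoothFun n}
    (hK : IsClosed K) (hf : f ∈ supportedIn K) : energyDensity f ∈ supportedIn K :=
  add_mem (Ideal.pow_mem_of_mem _ hf 2 two_pos) (gradInner_mem_supportedIn hK hf f)

lemma sq_radial_le {n : ℕ} (c : Euc n) (w : SmoothFun n) (x : Euc n) :
    radial c w x ^ 2 ≤ sqDist c x * gradSq w x := by
  simp only [radial_def, sqDist, gradSq_apply, sum_apply, mul_apply, pow_apply]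
  exact Finset.sum_mul_sq_le_sq_mul_sq _ _ _

lemma carlemanFlux_mem_supportedIn {n : ℕ} {K : Set (Euc n)} (hK : IsClosed K) (c : Euc n) (t : ℝ)
    {w : SmoothFun n} (hw : w ∈ supportedIn K) (i : Fin n) :
    carlemanFlux c t w i ∈ supportedIn K := by
  have hw2 : w ^ 2 ∈ supportedIn K := Ideal.pow_mem_of_mem _ hw 2 two_pos
  refine add_mem (add_mem (Ideal.mul_mem_left _ _ (D_mem_supportedIn hK hw i))
    (Ideal.mul_mem_right _ _ (add_mem (add_mem (neg_mem ?_) ?_) ?_)))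
    (Ideal.mul_mem_right _ _ (Ideal.mul_mem_left _ _ hw2))
  exacts [Ideal.mul_mem_left _ _ (gradInner_mem_supportedIn hK hw w),
    Ideal.mul_mem_left _ _ hw2, Ideal.mul_mem_left _ _ hw2]

-- Since `ρ ≥ 1`, the factor `ρ(2ρ - 1)` is at least `1`, and the cubic term absorbs `tz²Δψ`.
lemma mul_cube_mul_sq_le_carleman_terms {p q r t R z l : ℝ} (hp : 0 < p) (hpq : p ≤ q)
    (hr : 1 ≤ r) (ht : 0 < t) (hl : l ≤ 256 * p ^ 3 * t ^ 2) :
    256 * p ^ 3 * t ^ 3 * z ^ 2 ≤ 64 * t * q * R ^ 2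
      + 512 * t ^ 3 * q ^ 3 * r * (2 * r - 1) * z ^ 2
      + 128 * t ^ 2 * q ^ 2 * (2 * r - 1) * z ^ 2 - t * z ^ 2 * l := by
  have hq : 0 < q := hp.trans_le hpq
  have hr2 : 0 ≤ 2 * r - 1 := by linarith
  have hcubic : 512 * t ^ 3 * z ^ 2 * (p ^ 3 * 1)
      ≤ 512 * t ^ 3 * z ^ 2 * (q ^ 3 * (r * (2 * r - 1))) := by
    gcongr
    nlinarith
  have hcorrector : t * z ^ 2 * l ≤ t * z ^ 2 * (256 * p ^ 3 * t ^ 2) := by gcongr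
  have hradial : 0 ≤ 64 * t * q * R ^ 2 := by positivity
  have hquadratic : 0 ≤ 128 * t ^ 2 * q ^ 2 * (2 * r - 1) * z ^ 2 := by positivity
  linarith

lemma exists_carleman_pointwise (hK : IsCompact K) :
    ∃ c > 0, ∃ t₀ ≥ 1, ∀ t ≥ t₀, ∀ v ∈ supportedIn K, ∀ x : Euc (m + 1), 0 ≤ x (Fin.last m) →
      c * t ^ 3 * (expWeight (pole m) t * v) x ^ 2
          + 2 * (∑ i, D i (carlemanFlux (pole m) t (expWeight (pole m) t * v) i)) x
        ≤ (expWeight (pole m) t * laplacian v) x ^ 2 := by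
  obtain ⟨r, -, hr⟩ := exists_abs_le_of_isCompact hK (sqDist (pole m))
  obtain ⟨L, hL0, hL⟩ := exists_abs_le_of_isCompact hK (laplacian (corrector (pole m)))
  set p := Real.exp (-(2 * r))
  have hp : 0 < p := Real.exp_pos _
  refine ⟨512 * p ^ 3, by positivity, 1 + L / (256 * p ^ 3), le_add_of_nonneg_right (by positivity),
    fun t ht v hv x hx => ?_⟩
  have hLt : L / (256 * p ^ 3) ≤ t := by linarith
  have ht1 : 1 ≤ t := ht.trans' (le_add_of_nonneg_right (by positivity))
  rw [← conjSymm_add_conjSkew]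
  set w := expWeight (pole m) t * v
  have hid := congrArg (fun f : SmoothFun (m + 1) => f x)
    (two_mul_conjSymm_mul_conjSkew (pole m) t w)
  simp only [add_apply, sub_apply, mul_apply, pow_apply, ofNat_apply, algebraMap_apply,
    one_apply] at hid ⊢
  suffices h : 256 * p ^ 3 * t ^ 3 * w x ^ 2
      + (∑ i, D i (carlemanFlux (pole m) t w i)) x
      ≤ 2 * (conjSymm (pole m) t w x * conjSkew (pole m) t w x) by
    nlinarith [sq_nonneg (conjSymm (pole m) t w x - conjSkew (pole m) t w x)]
  by_cases hxK : x ∈ K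
  · have hpq : p ≤ weight (pole m) x :=
      Real.exp_le_exp.2 (neg_le_neg (by simpa using (le_abs_self _).trans (hr x hxK)))
    have hl : laplacian (corrector (pole m)) x ≤ 256 * p ^ 3 * t ^ 2 := by
      calc laplacian (corrector (pole m)) x ≤ L := (le_abs_self _).trans (hL x hxK)
        _ ≤ t * (256 * p ^ 3) := (div_le_iff₀ (by positivity)).1 hLt
        _ ≤ t ^ 2 * (256 * p ^ 3) := by gcongr; nlinarith
        _ = 256 * p ^ 3 * t ^ 2 := mul_comm _ _
    linarith [mul_cube_mul_sq_le_carleman_terms (R := radial (pole m) w x) (z := w x) hp hpq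
      (one_le_sqDist_pole hx) (zero_lt_one.trans_le ht1) hl]
  · have hradial : 0 ≤ 64 * t * weight (pole m) x * radial (pole m) w x ^ 2 := by
      have := weight_pos (pole m) x
      positivity
    have hw : w x = 0 := Ideal.mul_mem_left _ (expWeight (pole m) t) hv x hxK
    rw [hw] at hid ⊢
    linarith

lemma carleman_flux_terms_le {q r s k t R d g z G : ℝ} (hq : 0 ≤ q) (hq1 : q ≤ 1) (hr : 0 ≤ r)
    (ht : 1 ≤ t) (hR : R ^ 2 ≤ r * G) (hd : d ^ 2 ≤ G) (hs : |s| ≤ k) (hg : |g| ≤ k) :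
    (16 * t * q * R - 2 * t * s * z) * d + (-(8 * t * q * G) + 128 * t ^ 3 * r * q ^ 3 * z ^ 2
      + 64 * t ^ 2 * q ^ 2 * z ^ 2) * 1 + t * z ^ 2 * g
      ≤ (72 + 136 * r + 2 * k) * t ^ 3 * (z ^ 2 + G) := by
  have hG : 0 ≤ G := (sq_nonneg d).trans hd
  have hk : 0 ≤ k := (abs_nonneg s).trans hs
  have hRd : 2 * (R * d) ≤ r * G + G := by nlinarith [sq_nonneg (R - d)]
  have hsz : -(2 * (s * z * d)) ≤ k * (z ^ 2 + G) := by
    have hzd : |2 * (z * d)| ≤ z ^ 2 + G :=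
      abs_le.2 ⟨by nlinarith [sq_nonneg (z + d)], by nlinarith [sq_nonneg (z - d)]⟩
    calc -(2 * (s * z * d)) ≤ |s * (2 * (z * d))| := by
          rw [← abs_neg]
          exact (le_of_eq (by ring)).trans (le_abs_self _)
      _ ≤ k * (z ^ 2 + G) := by rw [abs_mul]; gcongr
  have hflux : 8 * t * q * (2 * (R * d)) ≤ 8 * t * 1 * (r * G + G) :=
    (by gcongr : _ ≤ 8 * t * q * (r * G + G)).trans (by gcongr)
  have hcubic : 128 * t ^ 3 * r * q ^ 3 * z ^ 2 ≤ 128 * t ^ 3 * r * 1 ^ 3 * z ^ 2 := by gcongr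
  have hquadratic : 64 * t ^ 2 * q ^ 2 * z ^ 2 ≤ 64 * t ^ 2 * 1 ^ 2 * z ^ 2 := by gcongr
  have htop : t * z ^ 2 * g ≤ t * z ^ 2 * k := by gcongr; exact (le_abs_self g).trans hg
  calc _ ≤ t * ((8 * r + 8) * G + k * (z ^ 2 + G) + k * z ^ 2) + 64 * t ^ 2 * z ^ 2
        + 128 * r * t ^ 3 * z ^ 2 := by
        have : 0 ≤ 8 * t * q * G := by positivity
        linarith [mul_le_mul_of_nonneg_left hsz (by linarith : 0 ≤ t)]
    _ ≤ t ^ 3 * ((8 * r + 8) * G + k * (z ^ 2 + G) + k * z ^ 2) + 64 * t ^ 3 * z ^ 2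
        + 128 * r * t ^ 3 * z ^ 2 := by
        gcongr
        exacts [le_self_pow₀ ht (by norm_num), by norm_num]
    _ ≤ _ := by
        have : 0 ≤ t ^ 3 * ((k + 128 * r + 64) * G + (8 * r + 8) * z ^ 2) := by positivity
        linarith

lemma exists_carlemanFlux_last_le (hK : IsCompact K) :
    ∃ C, 0 ≤ C ∧ ∀ t ≥ 1, ∀ w ∈ supportedIn K, ∀ y : Euc m,
      carlemanFlux (pole m) t w (Fin.last m) (hyperplane y)
        ≤ C * t ^ 3 * energyDensity w (hyperplane y) := by
  obtain ⟨r, hr0, hr⟩ := exists_abs_le_of_isCompact hK (sqDist (pole m))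
  obtain ⟨k₁, -, hk₁⟩ := exists_abs_le_of_isCompact hK (corrector (pole m))
  obtain ⟨k₂, hk₂0, hk₂⟩ := exists_abs_le_of_isCompact hK (D (Fin.last m) (corrector (pole m)))
  refine ⟨72 + 136 * r + 2 * max k₁ k₂, by positivity, fun t ht w hw y => ?_⟩
  have henergy := energyDensity_nonneg w (hyperplane y)
  by_cases hy : hyperplane y ∈ K
  · have hdisp : disp (pole m) (Fin.last m) (hyperplane y) = 1 := by simp [pole]
    have hρ := (le_abs_self _).trans (hr _ hy)
    simp only [carlemanFlux, add_apply, sub_apply, mul_apply, pow_apply, ofNat_apply,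
      algebraMap_apply, hdisp, energyDensity_apply]
    refine (carleman_flux_terms_le (weight_pos _ _).le (weight_le_one _ _) ?_ ht
      (sq_radial_le _ w _) (sq_D_le_gradSq w _ _) ((hk₁ _ hy).trans (le_max_left _ _))
      ((hk₂ _ hy).trans (le_max_right _ _))).trans ?_
    · exact zero_le_one.trans (one_le_sqDist_pole (hyperplane_last y).ge)
    · gcongr
  · rw [carlemanFlux_mem_supportedIn hK.isClosed _ t hw _ _ hy]
    positivity

lemma sq_expWeight_apply {n : ℕ} (c : Euc n) (t : ℝ) (x : Euc n) :
    expWeight c t x ^ 2 = Real.exp (2 * t * weight c x) := by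
  rw [expWeight, exp_apply, ← Real.exp_nat_mul, mul_assoc]
  rfl

lemma sq_expWeight_le {n : ℕ} (c : Euc n) {t : ℝ} (ht : 0 ≤ t) (x : Euc n) :
    expWeight c t x ^ 2 ≤ Real.exp (2 * t) := by
  rw [sq_expWeight_apply]
  exact Real.exp_le_exp.2 (mul_le_of_le_one_right (by positivity) (weight_le_one c x))

lemma energyDensity_expWeight_mul_le {n : ℕ} (c : Euc n) {t r : ℝ} (ht : 1 ≤ t) (v : SmoothFun n)
    {x : Euc n} (hx : sqDist c x ≤ r) :
    energyDensity (expWeight c t * v) x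
      ≤ (2 + 32 * r) * t ^ 2 * Real.exp (2 * t) * energyDensity v x := by
  have hρ := sqDist_nonneg c x
  have hr : 0 ≤ r := hρ.trans hx
  have ht2 : 1 ≤ t ^ 2 := one_le_pow₀ ht
  have hw := weight_pos c x
  have hgrad : gradSq (expWeight c t) x ≤ 16 * t ^ 2 * 1 ^ 2 * r * expWeight c t x ^ 2 := by
    simp only [gradSq_expWeight, mul_apply, pow_apply, ofNat_apply, algebraMap_apply]
    gcongr
    exact weight_le_one c x
  have hprod := gradSq_mul_le (expWeight c t) v x
  have henergy := energyDensity_nonneg v x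
  calc energyDensity (expWeight c t * v) x
      ≤ expWeight c t x ^ 2 * ((1 + 32 * r * t ^ 2) * v x ^ 2 + 2 * gradSq v x) := by
        rw [energyDensity_apply, mul_apply, mul_pow]
        linarith [mul_le_mul_of_nonneg_left hgrad (by positivity : 0 ≤ 2 * v x ^ 2)]
    _ ≤ expWeight c t x ^ 2 * ((2 + 32 * r) * t ^ 2 * energyDensity v x) := by
        gcongr
        rw [energyDensity_apply]
        nlinarith [mul_nonneg (sub_nonneg.2 ht2) (gradSq_nonneg v x), sq_nonneg (v x),
          mul_nonneg (sub_nonneg.2 ht2) (sq_nonneg (v x)), gradSq_nonneg v x,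
          mul_nonneg (mul_nonneg hr (sq_nonneg t)) (gradSq_nonneg v x)]
    _ ≤ Real.exp (2 * t) * ((2 + 32 * r) * t ^ 2 * energyDensity v x) := by
        gcongr
        exact sq_expWeight_le c (by linarith) x
    _ = _ := by ring

lemma exists_boundary_flux_le (hK : IsCompact K) :
    ∃ C, 0 ≤ C ∧ ∀ t ≥ 1, ∀ v ∈ supportedIn K,
      ∫ y, carlemanFlux (pole m) t (expWeight (pole m) t * v) (Fin.last m) (hyperplane y)
        ≤ C * t ^ 5 * Real.exp (2 * t) * ∫ y, energyDensity v (hyperplane y) := by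
  obtain ⟨r, hr0, hr⟩ := exists_abs_le_of_isCompact hK (sqDist (pole m))
  obtain ⟨C, hC0, hC⟩ := exists_carlemanFlux_last_le hK
  refine ⟨C * (2 + 32 * r), by positivity, fun t ht v hv => ?_⟩
  have hw := Ideal.mul_mem_left _ (expWeight (pole m) t) hv
  have hE := energyDensity_mem_supportedIn hK.isClosed hv
  rw [← integral_const_mul]
  refine integral_mono (integrable_comp_hyperplane_of_mem_supportedIn hK
      (carlemanFlux_mem_supportedIn hK.isClosed _ t hw _))
    ((integrable_comp_hyperplane_of_mem_supportedIn hK hE).const_mul _) fun y => ?_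
  calc carlemanFlux (pole m) t (expWeight (pole m) t * v) (Fin.last m) (hyperplane y)
      ≤ C * t ^ 3 * energyDensity (expWeight (pole m) t * v) (hyperplane y) := hC t ht _ hw y
    _ ≤ C * t ^ 3 * ((2 + 32 * r) * t ^ 2 * Real.exp (2 * t) * energyDensity v (hyperplane y)) := by
        by_cases hy : hyperplane y ∈ K
        · gcongr
          exact energyDensity_expWeight_mul_le _ ht v ((le_abs_self _).trans (hr _ hy))
        · rw [energyDensity_mem_supportedIn hK.isClosed hw _ hy, hE _ hy]
          simp
    _ = _ := by ring

theorem exists_carleman_inequality (hK : IsCompact K) :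
    ∃ c > 0, ∃ t₀ ≥ 1, ∃ C, 0 ≤ C ∧ ∀ t ≥ t₀, ∀ v ∈ supportedIn K,
      c * t ^ 3 * ∫ x in halfSpace m, (expWeight (pole m) t * v) x ^ 2
        ≤ (∫ x in halfSpace m, (expWeight (pole m) t * laplacian v) x ^ 2)
          + C * t ^ 5 * Real.exp (2 * t) * ∫ y, energyDensity v (hyperplane y) := by
  obtain ⟨c, hc, t₀, ht₀, hpointwise⟩ := exists_carleman_pointwise hK
  obtain ⟨C, hC0, hC⟩ := exists_boundary_flux_le hK
  refine ⟨c, hc, t₀, ht₀, 2 * C, by positivity, fun t ht v hv => ?_⟩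
  set w := expWeight (pole m) t * v
  have hw : w ∈ supportedIn K := Ideal.mul_mem_left _ _ hv
  have hflux := carlemanFlux_mem_supportedIn hK.isClosed (pole m) t hw
  have hint {f : SmoothFun (m + 1)} (hf : f ∈ supportedIn K) : IntegrableOn f (halfSpace m) :=
    (integrable_of_mem_supportedIn hK hf).integrableOn
  have hint_sq {f : SmoothFun (m + 1)} (hf : f ∈ supportedIn K) :
      IntegrableOn (fun x => f x ^ 2) (halfSpace m) :=
    hint (Ideal.pow_mem_of_mem _ hf 2 two_pos)
  have hw_int := (hint_sq hw).const_mul (c * t ^ 3)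
  have hdiv_int := (hint (sum_D_mem_supportedIn hK.isClosed hflux)).const_mul 2
  have hΔv : expWeight (pole m) t * laplacian v ∈ supportedIn K :=
    Ideal.mul_mem_left _ _ (laplacian_mem_supportedIn hK.isClosed hv)
  have hmono := setIntegral_mono_on (hw_int.add hdiv_int) (hint_sq hΔv)
    measurableSet_halfSpace fun x hx => hpointwise t ht v hv x (mem_halfSpace.1 hx).le
  rw [integral_add' hw_int hdiv_int, integral_const_mul, integral_const_mul,
    setIntegral_halfSpace_sum_D fun i => hasCompactSupport_of_mem_supportedIn hK (hflux i)] at hmono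
  linarith [hC t (ht₀.le.trans ht) v hv]

end Carleman

section HalfIntegral

variable {m : ℕ}

lemma mem_halfBall {R : ℝ} {x : Euc (m + 1)} :
    x ∈ halfBall (m + 1) m.succ_pos R ↔ ‖x‖ < R ∧ 0 < x (Fin.last m) := Iff.rfl

lemma halfBall_eq_ball_inter_halfSpace (R : ℝ) :
    halfBall (m + 1) m.succ_pos R = ball 0 R ∩ halfSpace m := by
  ext x
  rw [mem_halfBall, mem_inter_iff, mem_ball_zero_iff, mem_halfSpace]

lemma measurableSet_halfBall (R : ℝ) : MeasurableSet (halfBall (m + 1) m.succ_pos R) := by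
  rw [halfBall_eq_ball_inter_halfSpace]
  exact measurableSet_ball.inter measurableSet_halfSpace

lemma integrableOn_halfBall (f : SmoothFun (m + 1)) (R : ℝ) :
    IntegrableOn f (halfBall (m + 1) m.succ_pos R) := by
  rw [halfBall_eq_ball_inter_halfSpace]
  exact (f.continuous.continuousOn.integrableOn_compact (isCompact_closedBall 0 R)).mono_set
    (inter_subset_left.trans ball_subset_closedBall)

/-- Integration over the half ball of radius `2`. -/
def halfIntegral (m : ℕ) : SmoothFun (m + 1) →ₗ[ℝ] ℝ where
  toFun f := ∫ x in halfBall (m + 1) m.succ_pos 2, f x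
  map_add' f g := integral_add (integrableOn_halfBall f 2) (integrableOn_halfBall g 2)
  map_smul' t _ := integral_const_mul t _

lemma halfIntegral_mono {f g : SmoothFun (m + 1)}
    (h : ∀ x ∈ halfBall (m + 1) m.succ_pos 2, f x ≤ g x) : halfIntegral m f ≤ halfIntegral m g :=
  setIntegral_mono_on (integrableOn_halfBall f 2) (integrableOn_halfBall g 2)
    (measurableSet_halfBall 2) h

lemma halfIntegral_nonneg {f : SmoothFun (m + 1)} (h : ∀ x, 0 ≤ f x) : 0 ≤ halfIntegral m f :=
  integral_nonneg h

lemma setIntegral_halfSpace_eq_halfIntegral {f : SmoothFun (m + 1)}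
    (hf : f ∈ supportedIn (sqBall (pole m) (19 / 4))) :
    ∫ x in halfSpace m, f x = halfIntegral m f := by
  refine setIntegral_eq_of_subset_of_forall_sdiff_eq_zero measurableSet_halfSpace
    (fun x hx => hx.2) fun x hx => hf x fun hρ => hx.2 ?_
  exact ⟨norm_lt_two_of_sqDist_pole_le (mem_halfSpace.1 hx.1).le hρ, hx.1⟩

lemma hyperplane_notMem_sqBall_pole {y : Euc m} (hy : y ∉ ball 0 2) :
    hyperplane y ∉ sqBall (pole m) (19 / 4) := fun hρ => hy <| by
  rw [mem_ball_zero_iff, ← norm_hyperplane]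
  exact norm_lt_two_of_sqDist_pole_le (hyperplane_last y).ge hρ

end HalfIntegral

section Caccioppoli

variable {m : ℕ}

lemma bdryNormSq_nonneg (f : SmoothFun (m + 1)) : 0 ≤ bdryNormSq f :=
  integral_nonneg fun _ => sq_nonneg _

lemma abs_integral_hyperplane_mul_le {p : SmoothFun (m + 1)}
    (hp : p ∈ supportedIn (sqBall (pole m) (19 / 4))) (hp_le : ∀ x, |p x| ≤ 1)
    (f g : SmoothFun (m + 1)) :
    |∫ y, (p * f * g) (hyperplane y)| ≤ (bdryNormSq f + bdryNormSq g) / 2 := by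
  have hint (f : SmoothFun (m + 1)) :
      IntegrableOn (fun y => f (hyperplane y) ^ 2) (ball (0 : Euc m) 2) :=
    integrableOn_ball_comp_hyperplane (f.continuous.pow 2) 2
  rw [← setIntegral_eq_integral_of_forall_compl_eq_zero (s := ball 0 2) fun y hy => by
    simp [hp _ (hyperplane_notMem_sqBall_pole hy)], bdryNormSq, bdryNormSq,
    ← integral_add (hint f) (hint g), ← integral_div]
  refine abs_integral_le_integral_abs.trans <|
    integral_mono_of_nonneg (.of_forall fun _ => abs_nonneg _)
      (((hint f).add (hint g)).div_const _) (.of_forall fun y => ?_)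
  have hyoung := two_mul_le_add_sq |f (hyperplane y)| |g (hyperplane y)|
  rw [sq_abs, sq_abs] at hyoung
  calc |(p * f * g) (hyperplane y)|
      = |p (hyperplane y)| * (|f (hyperplane y)| * |g (hyperplane y)|) := by
        simp [abs_mul, mul_assoc]
    _ ≤ 1 * (|f (hyperplane y)| * |g (hyperplane y)|) := by gcongr; exact hp_le _
    _ ≤ (f (hyperplane y) ^ 2 + g (hyperplane y) ^ 2) / 2 := by linarith

lemma sum_D_mul_mul_D {n : ℕ} (p f g : SmoothFun n) :
    ∑ i, D i (p * f * D i g)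
      = p * f * laplacian g + p * gradInner f g + f * gradInner p g := by
  rw [sum_D_mul_D, Derivation.leibniz, smul_eq_mul, smul_eq_mul,
    gradInner_comm f g, gradInner_comm p g]
  ring

/-- Green's formula on the half ball, for a density `p` vanishing near its curved boundary. -/
lemma abs_halfIntegral_green_le {p : SmoothFun (m + 1)}
    (hp : p ∈ supportedIn (sqBall (pole m) (19 / 4))) (hp_le : ∀ x, |p x| ≤ 1)
    (f g : SmoothFun (m + 1)) :
    |halfIntegral m (p * f * laplacian g + p * gradInner f g + f * gradInner p g)|
      ≤ (bdryNormSq f + bdryNormSq (D (Fin.last m) g)) / 2 := by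
  have hF (i) : p * f * D i g ∈ supportedIn (sqBall (pole m) (19 / 4)) :=
    Ideal.mul_mem_right _ _ (Ideal.mul_mem_right _ _ hp)
  rw [← sum_D_mul_mul_D, ← setIntegral_halfSpace_eq_halfIntegral
      (sum_D_mem_supportedIn (isCompact_sqBall _ _).isClosed hF),
    setIntegral_halfSpace_sum_D
      fun i => hasCompactSupport_of_mem_supportedIn (isCompact_sqBall _ _) (hF i), abs_neg]
  exact abs_integral_hyperplane_mul_le hp hp_le f _

lemma abs_mul_le_of_sq_le {a z K X s : ℝ} (hz : z ^ 2 ≤ K * X) (hK : 0 ≤ K) (hX : 0 ≤ X)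
    (hs : 0 < s) : |a * z| ≤ s * X + K / (4 * s) * a ^ 2 := by
  refine abs_le_of_sq_le_sq ?_ (by positivity)
  have hsq : (s * X + K / (4 * s) * a ^ 2) ^ 2
      = (s * X - K / (4 * s) * a ^ 2) ^ 2 + a ^ 2 * (K * X) := by
    field_simp
    ring
  rw [hsq, mul_pow]
  exact (mul_le_mul_of_nonneg_left hz (sq_nonneg a)).trans
    (le_add_of_nonneg_left (sq_nonneg _))

lemma gradInner_pow {n : ℕ} (f g : SmoothFun n) (k : ℕ) :
    gradInner (f ^ (k + 1)) g = (k + 1 : ℕ) * f ^ k * gradInner f g := by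
  rw [gradInner_comm, Derivation.leibniz_pow, gradInner_comm f]
  simp [nsmul_eq_mul, mul_assoc]

section Cutoff

variable {η : SmoothFun (m + 1)} {κ : ℝ}

lemma abs_mul_mul_gradInner_le (hκ : ∀ x, gradSq η x ≤ κ) (f : SmoothFun (m + 1))
    (x : Euc (m + 1)) (a b : ℝ) {s : ℝ} (hs : 0 < s) :
    |a * (b * gradInner η f x)| ≤ s * (b ^ 2 * gradSq f x) + κ / (4 * s) * a ^ 2 := by
  have hκ_nonneg : 0 ≤ κ := (gradSq_nonneg η x).trans (hκ x)
  refine abs_mul_le_of_sq_le ?_ hκ_nonneg (mul_nonneg (sq_nonneg b) (gradSq_nonneg f x)) hs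
  calc (b * gradInner η f x) ^ 2 = b ^ 2 * gradInner η f x ^ 2 := mul_pow _ _ _
    _ ≤ b ^ 2 * (κ * gradSq f x) := by
      gcongr
      exact (sq_gradInner_le f η x).trans
        (mul_le_mul_of_nonneg_right (hκ x) (gradSq_nonneg f x))
    _ = κ * (b ^ 2 * gradSq f x) := by ring

lemma abs_halfIntegral_green_pow_le (hη : η ∈ supportedIn (sqBall (pole m) (19 / 4)))
    (hη_le : ∀ x, |η x| ≤ 1) (k : ℕ) (f g : SmoothFun (m + 1)) :
    |halfIntegral m (η ^ (k + 1) * f * laplacian g + η ^ (k + 1) * gradInner f g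
        + f * ((k + 1 : ℕ) * η ^ k * gradInner η g))|
      ≤ (bdryNormSq f + bdryNormSq (D (Fin.last m) g)) / 2 := by
  rw [← gradInner_pow]
  refine abs_halfIntegral_green_le (Ideal.pow_mem_of_mem _ hη _ k.succ_pos) (fun x => ?_) f g
  rw [pow_apply, abs_pow]
  exact pow_le_one₀ (abs_nonneg _) (hη_le x)

lemma halfIntegral_gradSq_le (hη : η ∈ supportedIn (sqBall (pole m) (19 / 4)))
    (hη_le : ∀ x, |η x| ≤ 1) (hκ : ∀ x, gradSq η x ≤ κ) (k : ℕ) (f : SmoothFun (m + 1)) {s : ℝ}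
    (hs : 0 < s) :
    halfIntegral m (η ^ (2 * k + 2) * gradSq f)
      ≤ s * halfIntegral m (η ^ (2 * k + 4) * laplacian f ^ 2)
        + (4 * (k + 1) ^ 2 * κ + 1 / s) * halfIntegral m (η ^ (2 * k) * f ^ 2)
        + (bdryNormSq f + bdryNormSq (D (Fin.last m) f)) := by
  have hgreen : halfIntegral m ((1 / 2 : ℝ) • (η ^ (2 * k + 2) * gradSq f)
      - (s / 2) • (η ^ (2 * k + 4) * laplacian f ^ 2)
      - ((4 * (k + 1) ^ 2 * κ + 1 / s) / 2) • (η ^ (2 * k) * f ^ 2))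
      ≤ (bdryNormSq f + bdryNormSq (D (Fin.last m) f)) / 2 := by
    refine ((halfIntegral_mono fun x _ => ?_).trans (le_abs_self _)).trans
      (abs_halfIntegral_green_pow_le hη hη_le (2 * k + 1) f f)
    have hcutoff := neg_le_of_abs_le
      (abs_mul_mul_gradInner_le hκ f x (2 * (k + 1) * f x) (η x) one_half_pos)
    have hsource := neg_le_of_abs_le (abs_mul_le_of_sq_le (a := f x) (K := 1) (s := s / 2)
      (one_mul ((η x ^ 2 * laplacian f x) ^ 2)).ge zero_le_one (sq_nonneg _) (half_pos hs))
    have hpow : 0 ≤ η x ^ (2 * k) := (even_two_mul k).pow_nonneg _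
    have hsum := mul_le_mul_of_nonneg_left (add_le_add hcutoff hsource) hpow
    simp only [sub_apply, add_apply, smul_apply, mul_apply, pow_apply, natCast_apply]
    rw [← sub_nonneg] at hsum ⊢
    refine hsum.trans_eq ?_
    push_cast [gradSq]
    field_simp
    ring
  simp only [map_sub, map_smul, smul_eq_mul] at hgreen
  linarith

lemma sq_laplacian_le_green_density (hη_le : ∀ x, |η x| ≤ 1) (hκ : ∀ x, gradSq η x ≤ κ)
    (hκ_pos : 0 < κ) (f : SmoothFun (m + 1)) (x : Euc (m + 1)) {s : ℝ} (hs : 0 < s) :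
    η x ^ 4 * laplacian f x ^ 2 / 2
      ≤ η x ^ 4 * laplacian f x ^ 2 + 4 * η x ^ 3 * laplacian f x * gradInner η f x
        - η x ^ 4 * f x * laplacian (laplacian f) x
        - 4 * η x ^ 3 * f x * gradInner η (laplacian f) x
        + s / 2 * (η x ^ 6 * gradSq (laplacian f) x) + 8 * κ * (η x ^ 2 * gradSq f x)
        + (1 + 16 * κ / s) / 2 * f x ^ 2 + laplacian (laplacian f) x ^ 2 / 2 := by
  have hcutoff₁ := neg_le_of_abs_le (abs_mul_mul_gradInner_le hκ f x
    (4 * η x ^ 2 * laplacian f x) (η x) (show 0 < 8 * κ by positivity))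
  have hcutoff₂ := le_of_abs_le (abs_mul_mul_gradInner_le hκ (laplacian f) x
    (4 * f x) (η x ^ 3) (half_pos hs))
  have hsource : η x ^ 4 * f x * laplacian (laplacian f) x
      ≤ f x ^ 2 / 2 + laplacian (laplacian f) x ^ 2 / 2 := by
    have hpow : (η x ^ 4) ^ 2 ≤ 1 := by
      rw [← pow_mul, ← Even.pow_abs (by decide)]
      exact pow_le_one₀ (abs_nonneg _) (hη_le x)
    nlinarith [two_mul_le_add_sq (η x ^ 4 * f x) (laplacian (laplacian f) x),
      mul_le_mul_of_nonneg_right hpow (sq_nonneg (f x))]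
  have hcoeff₁ : κ / (4 * (8 * κ)) = 1 / 32 := by
    field_simp
    norm_num
  have hcoeff₂ : κ / (4 * (s / 2)) * (4 * f x) ^ 2 = 16 * κ / s / 2 * f x ^ 2 := by
    field_simp
    ring
  rw [hcoeff₁] at hcutoff₁
  rw [hcoeff₂] at hcutoff₂
  linarith

lemma halfIntegral_sq_laplacian_le (hη : η ∈ supportedIn (sqBall (pole m) (19 / 4)))
    (hη_le : ∀ x, |η x| ≤ 1) (hκ : ∀ x, gradSq η x ≤ κ) (hκ_pos : 0 < κ) (f : SmoothFun (m + 1))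
    {s : ℝ} (hs : 0 < s) :
    halfIntegral m (η ^ 4 * laplacian f ^ 2)
      ≤ s * halfIntegral m (η ^ 6 * gradSq (laplacian f))
        + 16 * κ * halfIntegral m (η ^ 2 * gradSq f)
        + (1 + 16 * κ / s) * halfIntegral m (f ^ 2)
        + halfIntegral m (laplacian (laplacian f) ^ 2)
        + (bdryNormSq f + bdryNormSq (D (Fin.last m) f) + bdryNormSq (laplacian f)
          + bdryNormSq (D (Fin.last m) (laplacian f))) := by
  have hdifference := (abs_sub _ _).trans (add_le_add
    (abs_halfIntegral_green_pow_le hη hη_le 3 (laplacian f) f)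
    (abs_halfIntegral_green_pow_le hη hη_le 3 f (laplacian f)))
  rw [← map_sub] at hdifference
  have hgreen : halfIntegral m ((1 / 2 : ℝ) • (η ^ 4 * laplacian f ^ 2)
      - (s / 2) • (η ^ 6 * gradSq (laplacian f)) - (8 * κ) • (η ^ 2 * gradSq f)
      - ((1 + 16 * κ / s) / 2) • f ^ 2 - (1 / 2 : ℝ) • laplacian (laplacian f) ^ 2)
      ≤ (bdryNormSq (laplacian f) + bdryNormSq (D (Fin.last m) f)) / 2
        + (bdryNormSq f + bdryNormSq (D (Fin.last m) (laplacian f))) / 2 := by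
    refine ((halfIntegral_mono fun x _ => ?_).trans (le_abs_self _)).trans hdifference
    have hpointwise := sq_laplacian_le_green_density hη_le hκ hκ_pos f x hs
    rw [gradInner_comm f (laplacian f)]
    simp only [sub_apply, add_apply, smul_apply, mul_apply, pow_apply, natCast_apply]
    push_cast
    linarith
  simp only [map_sub, map_smul, smul_eq_mul] at hgreen
  linarith

end Cutoff

lemma caccioppoli_absorb {κ I₀ I₁ I₂ I₃ E : ℝ} (hκ : 1 ≤ κ) (hI₀ : I₀ ≤ E) (hE : 0 ≤ E)
    (h₁ : I₁ ≤ 1 / (64 * κ) * I₂ + (4 * κ + 64 * κ) * I₀ + E)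
    (h₂ : I₂ ≤ 1 / (148 * κ) * I₃ + 16 * κ * I₁ + (1 + 16 * κ * (148 * κ)) * I₀ + 2 * E)
    (h₃ : I₃ ≤ 37 * κ * I₂ + 2 * E) :
    I₁ + I₂ + I₃ ≤ 1000000 * κ ^ 3 * E := by
  have hκ_sq : κ ≤ κ ^ 2 := le_self_pow₀ hκ two_ne_zero
  have hκ_cube : κ ^ 2 ≤ κ ^ 3 := pow_le_pow_right₀ hκ (by norm_num)
  have hE_sq : E ≤ κ ^ 2 * E := le_mul_of_one_le_left hE (hκ.trans hκ_sq)
  have hκE_sq : κ * E ≤ κ ^ 2 * E := by gcongr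
  have hI₀_sq : κ ^ 2 * I₀ ≤ κ ^ 2 * E := by gcongr
  have hκI₀ : κ * I₀ ≤ κ * E := by gcongr
  have hI₂ : I₂ ≤ 8000 * κ ^ 2 * E := by
    have h₁' : 16 * κ * I₁ ≤ I₂ / 4 + 1088 * κ ^ 2 * I₀ + 16 * κ * E := by
      refine (mul_le_mul_of_nonneg_left h₁ (by positivity)).trans_eq ?_
      field_simp
      ring
    have h₃' : 1 / (148 * κ) * I₃ ≤ I₂ / 4 + 2 * E := by
      have hcoeff : 1 / (148 * κ) ≤ 1 := by
        rw [div_le_one (by positivity)]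
        linarith
      calc 1 / (148 * κ) * I₃ ≤ 1 / (148 * κ) * (37 * κ * I₂ + 2 * E) := by gcongr
        _ = I₂ / 4 + 1 / (148 * κ) * (2 * E) := by
          field_simp
          ring
        _ ≤ I₂ / 4 + 1 * (2 * E) := by gcongr
        _ = I₂ / 4 + 2 * E := by ring
    linarith
  have hκI₂ : 37 * κ * I₂ ≤ 296000 * κ ^ 3 * E :=
    (mul_le_mul_of_nonneg_left hI₂ (by positivity)).trans_eq (by ring)
  have hI₂_div : 1 / (64 * κ) * I₂ ≤ 8000 * κ ^ 2 * E := by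
    refine (mul_le_mul_of_nonneg_left hI₂ (by positivity)).trans ?_
    refine mul_le_of_le_one_left (by positivity) ?_
    rw [div_le_one (by positivity)]
    linarith
  have hE_cube : κ ^ 2 * E ≤ κ ^ 3 * E := by gcongr
  linarith

lemma exists_abs_le_of_mem_supportedIn {n : ℕ} {K : Set (Euc n)} {f : SmoothFun n}
    (hK : IsCompact K) (hf : f ∈ supportedIn K) : ∃ C, 0 ≤ C ∧ ∀ x, |f x| ≤ C := by
  obtain ⟨C, hC, hfC⟩ := exists_abs_le_of_isCompact hK f
  refine ⟨C, hC, fun x => ?_⟩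
  by_cases hx : x ∈ K
  · exact hfC x hx
  · simpa [hf x hx] using hC

/-- Square of the boundary data occurring in the Caccioppoli inequality: the traces of `f`, `Δf`
and of their normal derivatives. -/
def navierData (f : SmoothFun (m + 1)) : ℝ :=
  bdryNormSq f + bdryNormSq (D (Fin.last m) f) + bdryNormSq (laplacian f)
    + bdryNormSq (D (Fin.last m) (laplacian f))

lemma navierData_le (f : SmoothFun (m + 1)) :
    navierData f ≤ 2 * (1 + (m + 1) ^ 2) * cauchyData f ^ 2 := by
  have h₀ := bdryNormSq_foldr_D_le f (l := []) (by simp)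
  have h₁ := bdryNormSq_foldr_D_le f (l := [Fin.last m]) (by simp)
  have h₂ := bdryNormSq_laplacian_le f
  have h₃ := bdryNormSq_D_laplacian_le f (Fin.last m)
  simp only [List.foldr_cons, List.foldr_nil] at h₀ h₁
  rw [navierData]
  linarith

lemma caccioppoli_inequality {η : SmoothFun (m + 1)} {κ : ℝ}
    (hη : η ∈ supportedIn (sqBall (pole m) (19 / 4))) (hη_le : ∀ x, |η x| ≤ 1)
    (hκ : ∀ x, gradSq η x ≤ κ) (hκ_one : 1 ≤ κ) (f : SmoothFun (m + 1)) :
    halfIntegral m (η ^ 2 * gradSq f) + halfIntegral m (η ^ 4 * laplacian f ^ 2)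
        + halfIntegral m (η ^ 6 * gradSq (laplacian f))
      ≤ 1000000 * κ ^ 3 * (halfIntegral m (f ^ 2) + halfIntegral m (laplacian (laplacian f) ^ 2)
        + navierData f) := by
  have hsource : halfIntegral m (η ^ 8 * laplacian (laplacian f) ^ 2)
      ≤ halfIntegral m (laplacian (laplacian f) ^ 2) := halfIntegral_mono fun x _ => by
    rw [mul_apply, pow_apply, pow_apply, ← Even.pow_abs (by decide)]
    exact mul_le_of_le_one_left (sq_nonneg _) (pow_le_one₀ (abs_nonneg _) (hη_le x))
  have hgrad := halfIntegral_gradSq_le hη hη_le hκ 0 f (s := 1 / (64 * κ)) (by positivity)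
  have hlap := halfIntegral_sq_laplacian_le hη hη_le hκ (by positivity) f (s := 1 / (148 * κ))
    (by positivity)
  have hgrad_lap := halfIntegral_gradSq_le hη hη_le hκ 2 (laplacian f) one_pos
  simp only [mul_zero, zero_add, pow_zero, one_mul, CharP.cast_eq_zero, one_pow, mul_one,
    div_div_eq_mul_div, div_one] at hgrad hlap
  norm_num only [Nat.cast_ofNat] at hgrad_lap
  have hI₀ : 0 ≤ halfIntegral m (f ^ 2) := halfIntegral_nonneg fun x => sq_nonneg (f x)
  have hI₂ : 0 ≤ halfIntegral m (η ^ 4 * laplacian f ^ 2) := halfIntegral_nonneg fun x => by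
    rw [mul_apply, pow_apply, pow_apply]
    positivity
  have hR : 0 ≤ halfIntegral m (laplacian (laplacian f) ^ 2) :=
    halfIntegral_nonneg fun x => sq_nonneg (laplacian (laplacian f) x)
  have hκI₂ := mul_le_mul_of_nonneg_right hκ_one hI₂
  have h₀ := bdryNormSq_nonneg f
  have h₁ := bdryNormSq_nonneg (D (Fin.last m) f)
  have h₂ := bdryNormSq_nonneg (laplacian f)
  have h₃ := bdryNormSq_nonneg (D (Fin.last m) (laplacian f))
  apply caccioppoli_absorb (I₀ := halfIntegral m (f ^ 2)) hκ_one <;> rw [navierData] <;> linarith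

lemma exists_caccioppoli_inequality {η : SmoothFun (m + 1)}
    (hη : η ∈ supportedIn (sqBall (pole m) (19 / 4))) (hη_le : ∀ x, |η x| ≤ 1) :
    ∃ C, 0 ≤ C ∧ ∀ f : SmoothFun (m + 1),
      halfIntegral m (η ^ 2 * gradSq f) + halfIntegral m (η ^ 4 * laplacian f ^ 2)
        + halfIntegral m (η ^ 6 * gradSq (laplacian f))
      ≤ C * (halfIntegral m (f ^ 2) + halfIntegral m (laplacian (laplacian f) ^ 2)
        + cauchyData f ^ 2) := by
  obtain ⟨κ, hκ, hκ_le⟩ := exists_abs_le_of_mem_supportedIn (isCompact_sqBall _ _)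
    (gradInner_mem_supportedIn (isCompact_sqBall _ _).isClosed hη η)
  refine ⟨1000000 * (κ + 1) ^ 3 * (2 * (1 + (m + 1) ^ 2)), by positivity, fun f => ?_⟩
  have hκ_add (x) : gradSq η x ≤ κ + 1 := (le_of_abs_le (hκ_le x)).trans (by linarith)
  refine (caccioppoli_inequality hη hη_le hκ_add (by linarith) f).trans ?_
  rw [mul_assoc _ (2 * (1 + ((m : ℝ) + 1) ^ 2))]
  have hI₀ : 0 ≤ halfIntegral m (f ^ 2) := halfIntegral_nonneg fun x => sq_nonneg (f x)
  have hR : 0 ≤ halfIntegral m (laplacian (laplacian f) ^ 2) :=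
    halfIntegral_nonneg fun x => sq_nonneg (laplacian (laplacian f) x)
  gcongr
  nlinarith [navierData_le f, mul_nonneg (sq_nonneg ((m : ℝ) + 1)) (add_nonneg hI₀ hR)]

end Caccioppoli

section CutoffCommutator

variable {n : ℕ} {c : Euc n} {a b : ℝ}

/-- The commutator `[Δ, χ]f = 2⟨∇χ, ∇f⟩ + fΔχ` of the Laplacian with a cutoff function `χ`. -/
def laplacianCommutator (χ f : SmoothFun n) : SmoothFun n :=
  2 * gradInner χ f + f * laplacian χ

lemma laplacian_mul_eq_add_laplacianCommutator (χ f : SmoothFun n) :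
    laplacian (χ * f) = χ * laplacian f + laplacianCommutator χ f := by
  rw [laplacian_mul, laplacianCommutator, add_assoc]

lemma sq_laplacianCommutator_le (χ f : SmoothFun n) (x : Euc n) :
    laplacianCommutator χ f x ^ 2
      ≤ (8 * gradSq χ x + 2 * laplacian χ x ^ 2) * energyDensity f x := by
  have hcauchy := sq_gradInner_le f χ x
  have hΔ := mul_nonneg (sq_nonneg (laplacian χ x)) (gradSq_nonneg f x)
  have hΓ := mul_nonneg (gradSq_nonneg χ x) (sq_nonneg (f x))
  simp only [laplacianCommutator, energyDensity_apply, add_apply, mul_apply, ofNat_apply]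
  linarith [add_sq_le (a := 2 * gradInner χ f x) (b := f x * laplacian χ x)]

lemma laplacianCommutator_cutoff_mem_supportedIn (hab : a < b) (f : SmoothFun n) :
    laplacianCommutator (cutoff c a b) f ∈ supportedIn (shell c a b) := by
  rw [laplacianCommutator, gradInner_def]
  exact add_mem (Ideal.mul_mem_left _ _ <| Ideal.sum_mem _ fun i _ =>
    Ideal.mul_mem_right _ _ (D_cutoff_mem_supportedIn hab i))
    (Ideal.mul_mem_left _ _ (laplacian_cutoff_mem_supportedIn hab))

lemma exists_sq_laplacianCommutator_cutoff_le (hab : a < b) :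
    ∃ C, 0 ≤ C ∧ ∀ (f : SmoothFun n) (x : Euc n),
      laplacianCommutator (cutoff c a b) f x ^ 2 ≤ C * energyDensity f x := by
  obtain ⟨C, hC₀, hC⟩ := exists_abs_le_of_isCompact (isCompact_sqBall c b)
    (8 * gradSq (cutoff c a b) + 2 * laplacian (cutoff c a b) ^ 2)
  refine ⟨C, hC₀, fun f x => ?_⟩
  have henergy := energyDensity_nonneg f x
  by_cases hx : x ∈ shell c a b
  · refine (sq_laplacianCommutator_le _ f x).trans ?_
    gcongr
    exact le_of_abs_le (hC x hx.2)
  · rw [laplacianCommutator_cutoff_mem_supportedIn hab f x hx, zero_pow two_ne_zero]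
    positivity

lemma weight_le_of_le_sqDist {r : ℝ} {x : Euc n} (hx : r ≤ sqDist c x) :
    weight c x ≤ Real.exp (-(2 * r)) :=
  Real.exp_le_exp.2 (neg_le_neg (mul_le_mul_of_nonneg_left hx zero_le_two))

lemma le_weight_of_sqDist_le {r : ℝ} {x : Euc n} (hx : sqDist c x ≤ r) :
    Real.exp (-(2 * r)) ≤ weight c x :=
  Real.exp_le_exp.2 (neg_le_neg (mul_le_mul_of_nonneg_left hx zero_le_two))

lemma exists_sq_expWeight_mul_laplacianCommutator_le (hab : a < b) :
    ∃ C, 0 ≤ C ∧ ∀ f q : SmoothFun n, (∀ x, 0 ≤ q x) →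
      (∀ x ∈ shell c a b, energyDensity f x ≤ q x) → ∀ t ≥ 0, ∀ x,
      (expWeight c t * laplacianCommutator (cutoff c a b) f) x ^ 2
        ≤ C * Real.exp (2 * t * Real.exp (-(2 * a))) * q x := by
  obtain ⟨C, hC₀, hC⟩ := exists_sq_laplacianCommutator_cutoff_le (c := c) hab
  refine ⟨C, hC₀, fun f q hq hfq t ht x => ?_⟩
  have hqx := hq x
  by_cases hx : x ∈ shell c a b
  · have hweight : expWeight c t x ^ 2 ≤ Real.exp (2 * t * Real.exp (-(2 * a))) := by
      rw [sq_expWeight_apply]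
      gcongr
      exact weight_le_of_le_sqDist hx.1
    calc (expWeight c t * laplacianCommutator (cutoff c a b) f) x ^ 2
        = expWeight c t x ^ 2 * laplacianCommutator (cutoff c a b) f x ^ 2 := mul_pow _ _ 2
      _ ≤ Real.exp (2 * t * Real.exp (-(2 * a))) * (C * q x) := by
          gcongr
          exact (hC f x).trans (mul_le_mul_of_nonneg_left (hfq x hx) hC₀)
      _ = _ := by ring
  · rw [mul_apply, laplacianCommutator_cutoff_mem_supportedIn hab f x hx]
    simp only [mul_zero, zero_pow two_ne_zero]
    positivity

end CutoffCommutator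

section BoundaryEnergy

variable {m : ℕ}

/-- The squared `H¹` size `∫ f² + |∇f|²` of `f`, with its full gradient, on the boundary disc of
radius `2`. -/
def bdryEnergy (f : SmoothFun (m + 1)) : ℝ :=
  ∫ y in ball (0 : Euc m) 2, energyDensity f (hyperplane y)

lemma bdryEnergy_nonneg (f : SmoothFun (m + 1)) : 0 ≤ bdryEnergy f :=
  integral_nonneg fun _ => energyDensity_nonneg f _

lemma bdryEnergy_eq_bdryNormSq_add_sum (f : SmoothFun (m + 1)) :
    bdryEnergy f = bdryNormSq f + ∑ i, bdryNormSq (D i f) := by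
  have hint (g : SmoothFun (m + 1)) :
      IntegrableOn (fun y => g (hyperplane y) ^ 2) (ball (0 : Euc m) 2) :=
    integrableOn_ball_comp_hyperplane (g.continuous.pow 2) 2
  simp only [bdryEnergy, energyDensity_apply, gradSq_apply]
  rw [integral_add (hint f) (integrable_finsetSum _ fun i _ => hint (D i f)),
    integral_finsetSum _ fun i _ => hint (D i f)]
  rfl

lemma bdryEnergy_le {f : SmoothFun (m + 1)} {B : ℝ} (hf : bdryNormSq f ≤ B)
    (hDf : ∀ i, bdryNormSq (D i f) ≤ B) : bdryEnergy f ≤ (m + 2) * B := by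
  calc bdryEnergy f ≤ B + ∑ _i : Fin (m + 1), B := by
        rw [bdryEnergy_eq_bdryNormSq_add_sum]
        gcongr with i
        exact hDf i
    _ = (m + 2) * B := by
        simp only [Finset.sum_const, Finset.card_univ, Fintype.card_fin, nsmul_eq_mul]
        push_cast
        ring

lemma bdryEnergy_le_cauchyData (f : SmoothFun (m + 1)) :
    bdryEnergy f ≤ (m + 2) * (m + 1) ^ 2 * cauchyData f ^ 2 := by
  have hone : cauchyData f ^ 2 ≤ (m + 1) ^ 2 * cauchyData f ^ 2 :=
    le_mul_of_one_le_left (sq_nonneg _) (one_le_pow₀ (by linarith [m.cast_nonneg (α := ℝ)]))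
  rw [mul_assoc]
  exact bdryEnergy_le ((bdryNormSq_foldr_D_le f (l := []) (by simp)).trans hone)
    fun i => (bdryNormSq_foldr_D_le f (l := [i]) (by simp)).trans hone

lemma bdryEnergy_laplacian_le_cauchyData (f : SmoothFun (m + 1)) :
    bdryEnergy (laplacian f) ≤ (m + 2) * (m + 1) ^ 2 * cauchyData f ^ 2 := by
  rw [mul_assoc]
  exact bdryEnergy_le (bdryNormSq_laplacian_le f) (bdryNormSq_D_laplacian_le f)

lemma energyDensity_mul_le {n : ℕ} {χ : SmoothFun n} {x : Euc n} {C : ℝ} (hχ : χ x ^ 2 ≤ 1)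
    (hC : gradSq χ x ≤ C) (f : SmoothFun n) :
    energyDensity (χ * f) x ≤ (2 + 2 * C) * energyDensity f x := by
  have hprod := gradSq_mul_le χ f x
  have hχf := mul_le_mul_of_nonneg_right hχ (energyDensity_nonneg f x)
  have hCf := mul_le_mul_of_nonneg_right hC (energyDensity_nonneg f x)
  have hpos := mul_nonneg (sq_nonneg (χ x)) (sq_nonneg (f x))
  have hpos' := mul_nonneg (gradSq_nonneg χ x) (gradSq_nonneg f x)
  rw [energyDensity_apply] at hχf hCf
  rw [energyDensity_apply, energyDensity_apply, mul_apply, mul_pow]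
  linarith

lemma exists_integral_energyDensity_mul_le {χ : SmoothFun (m + 1)}
    (hχ : χ ∈ supportedIn (sqBall (pole m) (19 / 4))) (hχ_le : ∀ x, χ x ^ 2 ≤ 1) :
    ∃ C, ∀ f : SmoothFun (m + 1),
      ∫ y, energyDensity (χ * f) (hyperplane y) ≤ C * bdryEnergy f := by
  have hK := isCompact_sqBall (pole m) (19 / 4)
  obtain ⟨C, -, hC⟩ :=
    exists_abs_le_of_mem_supportedIn hK (gradInner_mem_supportedIn hK.isClosed hχ χ)
  refine ⟨2 + 2 * C, fun f => ?_⟩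
  have hmem := energyDensity_mem_supportedIn hK.isClosed (Ideal.mul_mem_right f _ hχ)
  rw [← setIntegral_eq_integral_of_forall_compl_eq_zero (s := ball 0 2) fun y hy =>
    hmem _ (hyperplane_notMem_sqBall_pole hy), bdryEnergy, ← integral_const_mul]
  exact setIntegral_mono (integrableOn_ball_comp_hyperplane (energyDensity (χ * f)).continuous 2)
    ((integrableOn_ball_comp_hyperplane (energyDensity f).continuous 2).const_mul _)
    fun y => energyDensity_mul_le (hχ_le _) (le_of_abs_le (hC _)) f

end BoundaryEnergy

section WeightedEstimate

variable {m : ℕ}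

/-- The cutoff function `χ` which localises a solution before the Carleman inequality is applied.
It equals `1` on the unit half ball, where `ρ < 4`, and `∇χ` lives in the shell
`17/4 ≤ ρ ≤ 9/2`. -/
def innerCutoff (m : ℕ) : SmoothFun (m + 1) := cutoff (pole m) (17 / 4) (9 / 2)

/-- The cutoff function `η` of the Caccioppoli inequality. It equals `1` on the support of
`innerCutoff m`, and its support meets the closed half space inside the ball of radius `2`. -/
def outerCutoff (m : ℕ) : SmoothFun (m + 1) := cutoff (pole m) (9 / 2) (19 / 4)

lemma innerCutoff_mem_supportedIn :
    innerCutoff m ∈ supportedIn (sqBall (pole m) (19 / 4)) :=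
  supportedIn_mono (fun x (hx : sqDist _ x ≤ 9 / 2) => hx.trans (by norm_num))
    (cutoff_mem_supportedIn (by norm_num))

/-- The weighted norm `∫ (e^{tφ}χf)²` over the half ball. -/
def weightedNormSq (t : ℝ) (f : SmoothFun (m + 1)) : ℝ :=
  halfIntegral m ((expWeight (pole m) t * (innerCutoff m * f)) ^ 2)

lemma weightedNormSq_nonneg (t : ℝ) (f : SmoothFun (m + 1)) : 0 ≤ weightedNormSq t f :=
  halfIntegral_nonneg fun _ => sq_nonneg _

lemma exists_halfIntegral_sq_expWeight_laplacian_le (m : ℕ) :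
    ∃ C, 0 ≤ C ∧ ∀ f q : SmoothFun (m + 1), (∀ x, 0 ≤ q x) →
      (∀ x ∈ shell (pole m) (17 / 4) (9 / 2), energyDensity f x ≤ q x) → ∀ t ≥ 0,
      halfIntegral m ((expWeight (pole m) t * laplacian (innerCutoff m * f)) ^ 2)
        ≤ 2 * weightedNormSq t (laplacian f)
          + C * Real.exp (2 * t * Real.exp (-(17 / 2))) * halfIntegral m q := by
  obtain ⟨C, hC₀, hC⟩ := exists_sq_expWeight_mul_laplacianCommutator_le (c := pole m)
    (a := 17 / 4) (b := 9 / 2) (by norm_num)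
  refine ⟨2 * C, by positivity, fun f q hq hfq t ht => ?_⟩
  rw [weightedNormSq, ← smul_eq_mul (a := (2 : ℝ)),
    ← smul_eq_mul (b := halfIntegral m q), ← map_smul, ← map_smul, ← map_add]
  refine halfIntegral_mono fun x _ => ?_
  have hcomm := hC f q hq hfq t ht x
  rw [show 2 * (17 / 4 : ℝ) = 17 / 2 by norm_num] at hcomm
  rw [laplacian_mul_eq_add_laplacianCommutator, mul_add]
  refine (add_sq_le (a := (expWeight (pole m) t * (innerCutoff m * laplacian f)) x)).trans ?_
  simp only [add_apply, smul_apply, pow_apply]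
  rw [innerCutoff] at *
  linarith

lemma exists_weighted_estimate (m : ℕ) :
    ∃ c > 0, ∃ t₀ ≥ 1, ∃ C, 0 ≤ C ∧ ∀ t ≥ t₀, ∀ f q : SmoothFun (m + 1), (∀ x, 0 ≤ q x) →
      (∀ x ∈ shell (pole m) (17 / 4) (9 / 2), energyDensity f x ≤ q x) →
      c * t ^ 3 * weightedNormSq t f
        ≤ 2 * weightedNormSq t (laplacian f)
          + C * Real.exp (2 * t * Real.exp (-(17 / 2))) * halfIntegral m q
          + C * t ^ 5 * Real.exp (2 * t) * bdryEnergy f := by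
  have hK := isCompact_sqBall (pole m) (19 / 4)
  obtain ⟨c, hc, t₀, ht₀, B, hB₀, hcarleman⟩ := exists_carleman_inequality hK
  obtain ⟨C₁, hC₁₀, hC₁⟩ := exists_halfIntegral_sq_expWeight_laplacian_le m
  obtain ⟨C₂, hC₂⟩ := exists_integral_energyDensity_mul_le
    (innerCutoff_mem_supportedIn (m := m))
    fun x => pow_le_one₀ (cutoff_nonneg x) (cutoff_le_one x)
  refine ⟨c, hc, t₀, ht₀, max C₁ (B * C₂), by positivity, fun t ht f q hq hfq => ?_⟩
  have ht_pos : 0 ≤ t := by linarith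
  have hmem : innerCutoff m * f ∈ supportedIn (sqBall (pole m) (19 / 4)) :=
    Ideal.mul_mem_right _ _ innerCutoff_mem_supportedIn
  have hbulk {g : SmoothFun (m + 1)} (hg : g ∈ supportedIn (sqBall (pole m) (19 / 4))) :
      ∫ x in halfSpace m, (expWeight (pole m) t * g) x ^ 2
        = halfIntegral m ((expWeight (pole m) t * g) ^ 2) :=
    setIntegral_halfSpace_eq_halfIntegral
      (Ideal.pow_mem_of_mem _ (Ideal.mul_mem_left _ _ hg) 2 two_pos)
  have hmain := hcarleman t ht _ hmem
  rw [hbulk hmem, hbulk (laplacian_mem_supportedIn hK.isClosed hmem), ← weightedNormSq] at hmain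
  have hq_int := halfIntegral_nonneg hq
  have hbdry_pos := bdryEnergy_nonneg f
  calc c * t ^ 3 * weightedNormSq t f
      ≤ (2 * weightedNormSq t (laplacian f)
          + C₁ * Real.exp (2 * t * Real.exp (-(17 / 2))) * halfIntegral m q)
        + B * t ^ 5 * Real.exp (2 * t) * (C₂ * bdryEnergy f) := by
        refine hmain.trans ?_
        gcongr
        exacts [hC₁ f q hq hfq t ht_pos, hC₂ f]
    _ = (2 * weightedNormSq t (laplacian f)
          + C₁ * Real.exp (2 * t * Real.exp (-(17 / 2))) * halfIntegral m q)
        + (B * C₂) * t ^ 5 * Real.exp (2 * t) * bdryEnergy f := by ring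
    _ ≤ _ := by
        gcongr
        exacts [le_max_left _ _, le_max_right _ _]

end WeightedEstimate

section CoupledEstimate

variable {m : ℕ}

lemma exists_shell_majorants (m : ℕ) :
    ∃ C, 0 ≤ C ∧ ∀ u : SmoothFun (m + 1), ∃ q₁ q₂ : SmoothFun (m + 1),
      (∀ x, 0 ≤ q₁ x) ∧ (∀ x, 0 ≤ q₂ x) ∧
      (∀ x ∈ shell (pole m) (17 / 4) (9 / 2), energyDensity u x ≤ q₁ x) ∧
      (∀ x ∈ shell (pole m) (17 / 4) (9 / 2), energyDensity (laplacian u) x ≤ q₂ x) ∧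
      halfIntegral m q₁ + halfIntegral m q₂ ≤ C * (halfIntegral m (u ^ 2)
        + halfIntegral m (laplacian (laplacian u) ^ 2) + cauchyData u ^ 2) := by
  set η := outerCutoff m
  have hη_nonneg (x) : 0 ≤ η x := cutoff_nonneg x
  have hη_one {x} (hx : x ∈ shell (pole m) (17 / 4) (9 / 2)) : η x = 1 :=
    cutoff_eq_one (by norm_num) hx.2
  obtain ⟨C, hC₀, hC⟩ := exists_caccioppoli_inequality (η := η)
    (cutoff_mem_supportedIn (by norm_num)) fun x => by
      rw [abs_of_nonneg (hη_nonneg x)]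
      exact cutoff_le_one x
  refine ⟨C + 1, by positivity, fun u => ⟨u ^ 2 + η ^ 2 * gradSq u,
    η ^ 4 * laplacian u ^ 2 + η ^ 6 * gradSq (laplacian u), fun x => ?_, fun x => ?_,
    fun x hx => ?_, fun x hx => ?_, ?_⟩⟩
  · have _ := hη_nonneg x
    have hgrad := gradSq_nonneg u x
    simp only [add_apply, mul_apply, pow_apply]
    positivity
  · have _ := hη_nonneg x
    have hgrad := gradSq_nonneg (laplacian u) x
    simp only [add_apply, mul_apply, pow_apply]
    positivity
  · simp [energyDensity_apply, hη_one hx]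
  · simp [energyDensity_apply, hη_one hx]
  · have hbi : 0 ≤ halfIntegral m (laplacian (laplacian u) ^ 2) :=
      halfIntegral_nonneg fun x => sq_nonneg (laplacian (laplacian u) x)
    rw [map_add, map_add]
    linarith [hC u, sq_nonneg (cauchyData u)]

/-- The right-hand side `e^{2te^{-17/2}} ∫ (u² + (Δ²u)²) + t⁵e^{2t}d²` of the weighted estimates for
`u` and `Δu`, where `d` is the size of the Cauchy data. -/
def weightedRemainder (t : ℝ) (u : SmoothFun (m + 1)) : ℝ :=
  Real.exp (2 * t * Real.exp (-(17 / 2)))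
      * (halfIntegral m (u ^ 2) + halfIntegral m (laplacian (laplacian u) ^ 2))
    + t ^ 5 * Real.exp (2 * t) * cauchyData u ^ 2

lemma exp_mul_exp_neg_le {t r : ℝ} (ht : 0 ≤ t) (hr : 0 ≤ r) :
    Real.exp (2 * t * Real.exp (-r)) ≤ Real.exp (2 * t) :=
  Real.exp_le_exp.2 <|
    mul_le_of_le_one_right (by positivity) (Real.exp_le_one_iff.2 (neg_nonpos.2 hr))

lemma remainder_terms_le {e₁ e₂ s A d q C N b : ℝ} (he₁ : 0 ≤ e₁) (he : e₁ ≤ e₂) (hs : 1 ≤ s)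
    (hA : 0 ≤ A) (hd : 0 ≤ d) (hC : 0 ≤ C) (hN : 0 ≤ N) (hq : q ≤ C * (A + d)) (hb : b ≤ N * d) :
    e₁ * q + s * e₂ * b ≤ (C + N) * (e₁ * A + s * e₂ * d) := by
  have hed : e₁ * d ≤ s * e₂ * d := by
    gcongr
    nlinarith
  have hNA : 0 ≤ N * (e₁ * A) := by positivity
  calc e₁ * q + s * e₂ * b ≤ e₁ * (C * (A + d)) + s * e₂ * (N * d) := by
        gcongr
        exact mul_nonneg (zero_le_one.trans hs) (he₁.trans he)
    _ ≤ (C + N) * (e₁ * A + s * e₂ * d) := by linarith [mul_le_mul_of_nonneg_left hed hC]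

lemma exists_weighted_system (m : ℕ) :
    ∃ c > 0, ∃ t₀ ≥ 1, ∃ C, 0 ≤ C ∧ ∀ t ≥ t₀, ∀ u : SmoothFun (m + 1),
      c * t ^ 3 * weightedNormSq t u
          ≤ 2 * weightedNormSq t (laplacian u) + C * weightedRemainder t u ∧
        c * t ^ 3 * weightedNormSq t (laplacian u)
          ≤ 2 * weightedNormSq t (laplacian (laplacian u)) + C * weightedRemainder t u := by
  obtain ⟨c, hc, t₀, ht₀, B, hB, hweighted⟩ := exists_weighted_estimate m
  obtain ⟨C, hC, hmajorants⟩ := exists_shell_majorants m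
  refine ⟨c, hc, t₀, ht₀, B * (C + (m + 2) * (m + 1) ^ 2), by positivity, fun t ht u => ?_⟩
  obtain ⟨q₁, q₂, hq₁, hq₂, huq₁, huq₂, hq⟩ := hmajorants u
  have ht_one : 1 ≤ t := ht₀.trans ht
  have hA : 0 ≤ halfIntegral m (u ^ 2) + halfIntegral m (laplacian (laplacian u) ^ 2) :=
    add_nonneg (halfIntegral_nonneg fun x => sq_nonneg (u x))
      (halfIntegral_nonneg fun x => sq_nonneg (laplacian (laplacian u) x))
  have hterms {q b : ℝ} (hq : q ≤ C * (halfIntegral m (u ^ 2)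
      + halfIntegral m (laplacian (laplacian u) ^ 2) + cauchyData u ^ 2))
      (hb : b ≤ (m + 2) * (m + 1) ^ 2 * cauchyData u ^ 2) :=
    mul_le_mul_of_nonneg_left (remainder_terms_le (Real.exp_pos _).le
      (exp_mul_exp_neg_le (t := t) (r := 17 / 2) (by linarith) (by norm_num))
      (one_le_pow₀ ht_one (n := 5)) hA (sq_nonneg _) hC (by positivity) hq hb) hB
  have hu := hweighted t ht u q₁ hq₁ huq₁
  have hΔu := hweighted t ht (laplacian u) q₂ hq₂ huq₂
  have hRu := hterms (q := halfIntegral m q₁) (by linarith [halfIntegral_nonneg hq₂])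
    (bdryEnergy_le_cauchyData u)
  have hRΔu := hterms (q := halfIntegral m q₂) (by linarith [halfIntegral_nonneg hq₁])
    (bdryEnergy_laplacian_le_cauchyData u)
  rw [weightedRemainder]
  constructor <;> linarith

lemma halfIntegral_sq_mul_le {M : ℝ} {f g : SmoothFun (m + 1)} (p : SmoothFun (m + 1))
    (hfg : ∀ x ∈ halfBall (m + 1) m.succ_pos 2, |g x| ≤ M * |f x|) :
    halfIntegral m ((p * g) ^ 2) ≤ M ^ 2 * halfIntegral m ((p * f) ^ 2) := by
  rw [← smul_eq_mul (a := M ^ 2), ← map_smul]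
  refine halfIntegral_mono fun x hx => ?_
  have hsq : g x ^ 2 ≤ M ^ 2 * f x ^ 2 := by
    rw [← sq_abs, ← sq_abs (f x), ← mul_pow]
    exact pow_le_pow_left₀ (abs_nonneg _) (hfg x hx) 2
  calc ((p * g) ^ 2) x = p x ^ 2 * g x ^ 2 := mul_pow _ _ 2
    _ ≤ p x ^ 2 * (M ^ 2 * f x ^ 2) := by gcongr
    _ = (M ^ 2 • (p * f) ^ 2) x := by simp only [smul_apply, pow_apply, mul_apply]; ring

/- Multiplying the first inequality by `cs` and inserting the second bounds `(cs)²X` by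
`4M²X ≤ (4/9)(cs)²X`, which is absorbed. -/
lemma le_of_coupled_inequalities {c s M X Y G : ℝ} (hc : 0 < c) (hs : 1 ≤ s) (hM : 0 ≤ M)
    (hMs : 3 * M ≤ c * s) (hX : 0 ≤ X) (hG : 0 ≤ G) (hXY : c * s * X ≤ 2 * Y + G)
    (hYX : c * s * Y ≤ 2 * M ^ 2 * X + G) : c ^ 2 * X ≤ 2 * (2 + c) * G := by
  have hcs : 0 ≤ c * s := by positivity
  have hM_sq : (3 * M) ^ 2 * X ≤ (c * s) ^ 2 * X := by gcongr
  have hsq : (c * s) ^ 2 * X ≤ 2 * (2 + c * s) * G := by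
    linarith [mul_le_mul_of_nonneg_left hXY hcs, mul_nonneg hcs hG]
  have hs_sq : s * (c ^ 2 * X) ≤ (c * s) ^ 2 * X := by
    nlinarith [mul_nonneg (mul_nonneg (sq_nonneg c) hX) (mul_nonneg (sub_nonneg.2 hs)
      (zero_le_one.trans hs))]
  refine le_of_mul_le_mul_left ?_ (zero_lt_one.trans_le hs)
  calc s * (c ^ 2 * X) ≤ 2 * (2 + c * s) * G := hs_sq.trans hsq
    _ ≤ 2 * (2 * s + c * s) * G := by gcongr; linarith
    _ = s * (2 * (2 + c) * G) := by ring

lemma three_mul_le_mul_pow_three {c M t t₁ : ℝ} (hc : 0 < c) (hM : 0 ≤ M) (ht₁ : 1 ≤ t₁)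
    (hct₁ : 3 / c ≤ t₁) (ht : t₁ * (1 + M ^ (1 / 3 : ℝ)) ≤ t) : 3 * M ≤ c * t ^ 3 := by
  have hroot : (M ^ (1 / 3 : ℝ)) ^ 3 = M := by
    rw [← Real.rpow_natCast, ← Real.rpow_mul hM]
    norm_num
  calc 3 * M = c * (3 / c * M) := by field_simp
    _ ≤ c * (t₁ ^ 3 * M) := by
        gcongr
        exact hct₁.trans (le_self_pow₀ ht₁ (by norm_num))
    _ = c * (t₁ * M ^ (1 / 3 : ℝ)) ^ 3 := by rw [mul_pow, hroot]
    _ ≤ c * t ^ 3 := by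
        gcongr
        linarith

lemma weightedRemainder_le {c M t : ℝ} (hM : 0 ≤ M) (ht : 1 ≤ t) (hMt : 3 * M ≤ c * t ^ 3)
    {u : SmoothFun (m + 1)}
    (hu : ∀ x ∈ halfBall (m + 1) m.succ_pos 2, |laplacian (laplacian u) x| ≤ M * |u x|) :
    weightedRemainder t u ≤ (1 + c ^ 2) * t ^ 6 *
      (Real.exp (2 * t * Real.exp (-(17 / 2))) * halfIntegral m (u ^ 2)
        + Real.exp (2 * t) * cauchyData u ^ 2) := by
  have hA : 0 ≤ halfIntegral m (u ^ 2) := halfIntegral_nonneg fun x => sq_nonneg (u x)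
  have hbi : halfIntegral m (laplacian (laplacian u) ^ 2) ≤ M ^ 2 * halfIntegral m (u ^ 2) := by
    simpa only [one_mul] using halfIntegral_sq_mul_le 1 hu
  have ht6 : 1 ≤ t ^ 6 := one_le_pow₀ ht
  have hM_sq : 1 + M ^ 2 ≤ (1 + c ^ 2) * t ^ 6 := by nlinarith
  have ht5 : t ^ 5 ≤ (1 + c ^ 2) * t ^ 6 :=
    (pow_le_pow_right₀ ht (by norm_num)).trans
      (le_mul_of_one_le_left (by positivity) (le_add_of_nonneg_right (sq_nonneg c)))
  calc weightedRemainder t u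
      ≤ Real.exp (2 * t * Real.exp (-(17 / 2))) * ((1 + M ^ 2) * halfIntegral m (u ^ 2))
        + t ^ 5 * Real.exp (2 * t) * cauchyData u ^ 2 := by
        rw [weightedRemainder]
        gcongr
        linarith
    _ ≤ Real.exp (2 * t * Real.exp (-(17 / 2))) * ((1 + c ^ 2) * t ^ 6 * halfIntegral m (u ^ 2))
        + (1 + c ^ 2) * t ^ 6 * Real.exp (2 * t) * cauchyData u ^ 2 := by gcongr
    _ = _ := by ring

lemma exists_weightedNormSq_le (m : ℕ) :
    ∃ C, 0 ≤ C ∧ ∃ t₁ : ℝ, 1 ≤ t₁ ∧ ∀ M : ℝ, 0 ≤ M → ∀ u : SmoothFun (m + 1),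
      (∀ x ∈ halfBall (m + 1) m.succ_pos 2, |laplacian (laplacian u) x| ≤ M * |u x|) →
      ∀ t ≥ t₁ * (1 + M ^ (1 / 3 : ℝ)),
        weightedNormSq t u ≤ C * t ^ 6 *
          (Real.exp (2 * t * Real.exp (-(17 / 2))) * halfIntegral m (u ^ 2)
            + Real.exp (2 * t) * cauchyData u ^ 2) := by
  obtain ⟨c, hc, t₀, ht₀, C, hC, hsystem⟩ := exists_weighted_system m
  have ht₁ : 1 ≤ max t₀ (3 / c) := ht₀.trans (le_max_left _ _)
  refine ⟨2 * (2 + c) * C * (1 + c ^ 2) / c ^ 2, by positivity, max t₀ (3 / c), ht₁,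
    fun M hM u hu t ht => ?_⟩
  have hroot : 0 ≤ M ^ (1 / 3 : ℝ) := Real.rpow_nonneg hM _
  have ht₁t : max t₀ (3 / c) ≤ t :=
    (le_mul_of_one_le_right (by positivity) (le_add_of_nonneg_right hroot)).trans ht
  have hMt := three_mul_le_mul_pow_three hc hM ht₁ (le_max_right _ _) ht
  have ht_one := ht₁.trans ht₁t
  obtain ⟨h₁, h₂⟩ := hsystem t ((le_max_left _ _).trans ht₁t) u
  have hbi : weightedNormSq t (laplacian (laplacian u)) ≤ M ^ 2 * weightedNormSq t u := by
    simpa only [weightedNormSq, mul_assoc] using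
      halfIntegral_sq_mul_le (expWeight (pole m) t * innerCutoff m) hu
  have hrem_nonneg : 0 ≤ weightedRemainder t u := by
    have hA : 0 ≤ halfIntegral m (u ^ 2) := halfIntegral_nonneg fun x => sq_nonneg (u x)
    have hbi : 0 ≤ halfIntegral m (laplacian (laplacian u) ^ 2) :=
      halfIntegral_nonneg fun x => sq_nonneg (laplacian (laplacian u) x)
    rw [weightedRemainder]
    positivity
  have habsorb := le_of_coupled_inequalities hc (one_le_pow₀ ht_one) hM hMt
    (weightedNormSq_nonneg t u) (by positivity) h₁ (h₂.trans (by linarith))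
  have hrem := mul_le_mul_of_nonneg_left (weightedRemainder_le hM ht_one hMt hu)
    (by positivity : 0 ≤ 2 * (2 + c) * C)
  rw [div_mul_eq_mul_div, div_mul_eq_mul_div, le_div_iff₀ (by positivity)]
  linarith

lemma exp_mul_setIntegral_sq_le_weightedNormSq {t : ℝ} (ht : 0 ≤ t) (u : SmoothFun (m + 1)) :
    Real.exp (2 * t * Real.exp (-8)) * ∫ x in halfBall (m + 1) m.succ_pos 1, u x ^ 2
      ≤ weightedNormSq t u := by
  have hint (f : SmoothFun (m + 1)) (R : ℝ) := integrableOn_halfBall (f ^ 2) R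
  rw [← integral_const_mul]
  refine (setIntegral_mono_on ((hint u 1).const_mul _) (hint _ 1) (measurableSet_halfBall 1)
    fun x hx => ?_).trans (setIntegral_mono_set (hint _ 2) (.of_forall fun x => sq_nonneg _)
      (LE.le.eventuallyLE (halfBall_subset_halfBall m.succ_pos one_le_two)))
  have hρ := (sqDist_pole_lt_four hx.1).le
  have hχ : innerCutoff m x = 1 := cutoff_eq_one (by norm_num) (hρ.trans (by norm_num))
  have hφ := le_weight_of_sqDist_le hρ
  rw [show -(2 * (4 : ℝ)) = -8 by norm_num] at hφ
  calc Real.exp (2 * t * Real.exp (-8)) * u x ^ 2 ≤ expWeight (pole m) t x ^ 2 * u x ^ 2 := by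
        rw [sq_expWeight_apply]
        gcongr
    _ = ((expWeight (pole m) t * (innerCutoff m * u)) ^ 2) x := by
        simp only [pow_apply, mul_apply, hχ]
        ring

lemma pow_le_factorial_div_mul_exp {δ t : ℝ} (hδ : 0 < δ) (ht : 0 ≤ t) (k : ℕ) :
    t ^ k ≤ k.factorial / δ ^ k * Real.exp (δ * t) := by
  have h := Real.pow_div_factorial_le_exp (δ * t) (by positivity) k
  rw [div_le_iff₀ (by positivity), mul_pow] at h
  rw [div_mul_eq_mul_div, le_div_iff₀ (by positivity)]
  linarith

lemma exists_setIntegral_sq_le (m : ℕ) :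
    ∃ δ > 0, ∃ β > 0, ∃ C : ℝ, 1 ≤ C ∧ ∃ t₁ : ℝ, 1 ≤ t₁ ∧ ∀ M : ℝ, 0 ≤ M →
      ∀ u : SmoothFun (m + 1),
      (∀ x ∈ halfBall (m + 1) m.succ_pos 2, |laplacian (laplacian u) x| ≤ M * |u x|) →
      ∀ t ≥ t₁ * (1 + M ^ (1 / 3 : ℝ)),
        ∫ x in halfBall (m + 1) m.succ_pos 1, u x ^ 2
          ≤ C * (Real.exp (-(δ * t)) * halfIntegral m (u ^ 2)
            + Real.exp (β * t) * cauchyData u ^ 2) := by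
  obtain ⟨C, hC, t₁, ht₁, hweighted⟩ := exists_weightedNormSq_le m
  set a := Real.exp (-(17 / 2))
  set b := Real.exp (-8)
  set δ := b - a with hδ_def
  have hδ : 0 < δ := sub_pos.2 (Real.exp_lt_exp.2 (by norm_num))
  set B := C * (Nat.factorial 6 / δ ^ 6)
  have hB : 0 ≤ B := by positivity
  refine ⟨δ, hδ, 2 + δ, by positivity, 1 + B, by linarith, t₁, ht₁, fun M hM u hu t ht => ?_⟩
  have ht_nonneg : 0 ≤ t := le_trans (by positivity) ht
  have hA : 0 ≤ halfIntegral m (u ^ 2) := halfIntegral_nonneg fun x => sq_nonneg (u x)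
  refine le_of_mul_le_mul_left ?_ (Real.exp_pos (2 * t * b))
  calc Real.exp (2 * t * b) * ∫ x in halfBall (m + 1) m.succ_pos 1, u x ^ 2
      ≤ C * t ^ 6 * (Real.exp (2 * t * a) * halfIntegral m (u ^ 2)
          + Real.exp (2 * t) * cauchyData u ^ 2) :=
        (exp_mul_setIntegral_sq_le_weightedNormSq ht_nonneg u).trans (hweighted M hM u hu t ht)
    _ ≤ C * (Nat.factorial 6 / δ ^ 6 * Real.exp (δ * t)) * (Real.exp (2 * t * a)
          * halfIntegral m (u ^ 2) + Real.exp (2 * t) * cauchyData u ^ 2) := by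
        gcongr
        exact pow_le_factorial_div_mul_exp hδ ht_nonneg 6
    _ = B * (Real.exp (δ * t + 2 * t * a) * halfIntegral m (u ^ 2)
          + Real.exp (δ * t + 2 * t) * cauchyData u ^ 2) := by
        rw [Real.exp_add, Real.exp_add]
        ring
    _ ≤ (1 + B) * (Real.exp (2 * t * b + -(δ * t)) * halfIntegral m (u ^ 2)
          + Real.exp (2 * t * b + (2 + δ) * t) * cauchyData u ^ 2) := by
        have hexp : δ * t + 2 * t ≤ 2 * t * b + (2 + δ) * t := by
          linarith [mul_nonneg (mul_nonneg zero_le_two ht_nonneg) (Real.exp_pos (-8)).le]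
        rw [show δ * t + 2 * t * a = 2 * t * b + -(δ * t) by rw [hδ_def]; ring]
        gcongr ?_ * (_ + ?_ * _)
        · exact (lt_one_add B).le
        · exact Real.exp_le_exp.2 hexp
    _ = _ := by
        rw [Real.exp_add, Real.exp_add]
        ring

end CoupledEstimate

end SmoothFun

section Optimization

variable {A d X Y C T δ β κ : ℝ}

lemma le_rpow_mul_rpow_of_le (hA : 0 ≤ A) (hAd : A ≤ d) (hκ₀ : 0 ≤ κ) (hκ₁ : κ ≤ 1) :
    A ≤ A ^ κ * d ^ (1 - κ) := by
  have hκ : 0 ≤ 1 - κ := sub_nonneg.2 hκ₁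
  calc A = A ^ κ * A ^ (1 - κ) := by
        rw [← Real.rpow_add_of_nonneg hA hκ₀ hκ, add_sub_cancel, Real.rpow_one]
    _ ≤ A ^ κ * d ^ (1 - κ) := by gcongr

lemma nonpos_of_le_mul_exp_neg (hδ : 0 < δ) (h : ∀ t ≥ T, X ≤ A * Real.exp (-(δ * t))) :
    X ≤ 0 := by
  have hlim : Filter.Tendsto (fun t : ℝ => A * Real.exp (-(δ * t))) Filter.atTop (nhds 0) := by
    simpa using (Real.tendsto_exp_neg_atTop_nhds_zero.comp
      (Filter.tendsto_id.const_mul_atTop hδ)).const_mul A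
  exact ge_of_tendsto hlim (Filter.eventually_atTop.2 ⟨T, h⟩)

lemma exists_exp_mul_eq_rpow_mul_rpow (hδ : 0 < δ) (hβ : 0 < β) (hd : 0 < d) (hdA : d ≤ A) :
    ∃ s ≥ 0, Real.exp (-(δ * s)) * A = A ^ (β / (δ + β)) * d ^ (1 - β / (δ + β)) ∧
      Real.exp (β * s) * d = A ^ (β / (δ + β)) * d ^ (1 - β / (δ + β)) := by
  have hA : 0 < A := hd.trans_le hdA
  have hlog : Real.log d ≤ Real.log A := Real.log_le_log hd hdA
  refine ⟨(Real.log A - Real.log d) / (δ + β),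
    div_nonneg (sub_nonneg.2 hlog) (by positivity), ?_, ?_⟩
  · nth_rewrite 2 [← Real.exp_log hA]
    rw [Real.rpow_def_of_pos hA, Real.rpow_def_of_pos hd, ← Real.exp_add, ← Real.exp_add]
    congr 1
    field_simp
    ring
  · nth_rewrite 2 [← Real.exp_log hd]
    rw [Real.rpow_def_of_pos hA, Real.rpow_def_of_pos hd, ← Real.exp_add, ← Real.exp_add]
    congr 1
    field_simp
    ring

lemma le_rpow_mul_rpow_of_forall_le_exp (hδ : 0 < δ) (hβ : 0 < β) (hC : 1 ≤ C) (hT : 0 ≤ T)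
    (hA : 0 ≤ A) (hd : 0 ≤ d) (hXA : X ≤ A)
    (h : ∀ t ≥ T, X ≤ C * (Real.exp (-(δ * t)) * A + Real.exp (β * t) * d)) :
    X ≤ 2 * C * Real.exp (β * T) * (A ^ (β / (δ + β)) * d ^ (1 - β / (δ + β))) := by
  set P := A ^ (β / (δ + β)) * d ^ (1 - β / (δ + β)) with hP
  have hP_nonneg : 0 ≤ P := by positivity
  have hE : 1 ≤ Real.exp (β * T) := Real.one_le_exp (by positivity)
  have hCP : 0 ≤ C * P := by positivity
  have hPE : C * P ≤ C * P * Real.exp (β * T) := le_mul_of_one_le_right hCP hE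
  rcases hd.eq_or_lt with rfl | hd_pos
  · refine (nonpos_of_le_mul_exp_neg (A := C * A) (T := T) hδ fun t ht => ?_).trans (by positivity)
    linarith [h t ht]
  rcases le_total A d with hAd | hdA
  · have hAP : A ≤ P := le_rpow_mul_rpow_of_le hA hAd (by positivity)
      ((div_le_one (by positivity)).2 (by linarith))
    have hP_le : P ≤ C * P := le_mul_of_one_le_left hP_nonneg hC
    linarith
  · obtain ⟨s, hs, hsA, hsd⟩ := exists_exp_mul_eq_rpow_mul_rpow hδ hβ hd_pos hdA
    have hdecay : Real.exp (-(δ * (T + s))) * A ≤ P := by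
      rw [hP, ← hsA]
      gcongr
      linarith
    have hgrowth : Real.exp (β * (T + s)) * d = Real.exp (β * T) * P := by
      rw [mul_add, Real.exp_add, mul_assoc, hsd]
    calc X ≤ C * (P + Real.exp (β * T) * P) := by
          rw [← hgrowth]
          exact (h (T + s) (by linarith)).trans (by gcongr)
      _ ≤ 2 * C * Real.exp (β * T) * P := by linarith

lemma rpow_half_le_of_le_exp_mul_rpow (hX : 0 ≤ X) (hA : 0 ≤ A) (hd : 0 ≤ d)
    (h : X ≤ Real.exp (2 * Y) * (A ^ κ * (d ^ 2) ^ (1 - κ))) :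
    X ^ (1 / 2 : ℝ) ≤ Real.exp Y * (A ^ (1 / 2 : ℝ)) ^ κ * d ^ (1 - κ) := by
  have hswap {a : ℝ} (ha : 0 ≤ a) (p q : ℝ) : (a ^ p) ^ q = (a ^ q) ^ p := by
    rw [← Real.rpow_mul ha, ← Real.rpow_mul ha, mul_comm]
  have hd_sq : (d ^ 2) ^ (1 / 2 : ℝ) = d := by rw [← Real.sqrt_eq_rpow, Real.sqrt_sq hd]
  calc X ^ (1 / 2 : ℝ) ≤ (Real.exp (2 * Y) * (A ^ κ * (d ^ 2) ^ (1 - κ))) ^ (1 / 2 : ℝ) := by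
        gcongr
    _ = Real.exp Y * ((A ^ (1 / 2 : ℝ)) ^ κ * ((d ^ 2) ^ (1 / 2 : ℝ)) ^ (1 - κ)) := by
        rw [Real.mul_rpow (by positivity) (by positivity),
          Real.mul_rpow (by positivity) (by positivity), ← Real.exp_mul, hswap hA,
          hswap (sq_nonneg d), mul_comm 2 Y, mul_assoc]
        norm_num
    _ = Real.exp Y * (A ^ (1 / 2 : ℝ)) ^ κ * d ^ (1 - κ) := by rw [hd_sq, mul_assoc]

lemma two_mul_mul_exp_le (hT : 1 ≤ T) (hC : 0 ≤ C) :
    2 * C * Real.exp (β * T) ≤ Real.exp (2 * ((C + β / 2) * T)) := by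
  have hCT : 2 * C ≤ 2 * C * T := le_mul_of_one_le_right (by positivity) hT
  calc 2 * C * Real.exp (β * T) ≤ Real.exp (2 * C * T) * Real.exp (β * T) := by
        gcongr
        linarith [Real.add_one_le_exp (2 * C * T)]
    _ = Real.exp (2 * ((C + β / 2) * T)) := by
        rw [← Real.exp_add]
        ring_nf

end Optimization

theorem stmt_12_general (n : ℕ) (hn : 0 < n) :
    ∃ κ : ℝ, κ ∈ Set.Ioo (0 : ℝ) 1 ∧ ∃ C : ℝ, 0 < C ∧
      ∀ (M : ℝ), 0 ≤ M →
      ∀ (u : EuclideanSpace ℝ (Fin n) → ℝ), ContDiff ℝ (⊤ : ℕ∞) u →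
        (∀ x ∈ halfBall n hn 2, |lap (lap u) x| ≤ M * |u x|) →
        (∫ x in halfBall n hn 1, (u x) ^ 2) ^ (1 / 2 : ℝ)
          ≤ Real.exp (C * (1 + M ^ (1 / 3 : ℝ)))
            * ((∫ x in halfBall n hn 2, (u x) ^ 2) ^ (1 / 2 : ℝ)) ^ κ
            * (∑ j ∈ Finset.range 4,
                Real.sqrt (bdryHnormSq n (3 - j) 2 ((pd (lastIdx n hn))^[j] u)))
              ^ (1 - κ) := by
  obtain ⟨m, rfl⟩ := Nat.exists_eq_add_one.2 hn
  obtain ⟨δ, hδ, β, hβ, C, hC, t₁, ht₁, hestimate⟩ := SmoothFun.exists_setIntegral_sq_le m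
  refine ⟨β / (δ + β), ⟨by positivity, (div_lt_one (by positivity)).2 (by linarith)⟩,
    C + β * t₁ / 2, by positivity, fun M hM u hu hbound => ?_⟩
  have hμ : 1 ≤ 1 + M ^ (1 / 3 : ℝ) := le_add_of_nonneg_right (by positivity)
  have hInt : ∫ x in halfBall (m + 1) hn 1, u x ^ 2 ≤ ∫ x in halfBall (m + 1) hn 2, u x ^ 2 :=
    setIntegral_mono_set (SmoothFun.integrableOn_halfBall (⟨u, hu⟩ ^ 2) 2)
      (.of_forall fun x => sq_nonneg (u x))
      (LE.le.eventuallyLE (halfBall_subset_halfBall hn one_le_two))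
  refine rpow_half_le_of_le_exp_mul_rpow (integral_nonneg fun x => sq_nonneg (u x))
    (integral_nonneg fun x => sq_nonneg (u x)) (SmoothFun.cauchyData_nonneg u) ?_
  refine (le_rpow_mul_rpow_of_forall_le_exp hδ hβ hC (T := t₁ * (1 + M ^ (1 / 3 : ℝ)))
    (by positivity) (integral_nonneg fun x => sq_nonneg (u x))
    (sq_nonneg (SmoothFun.cauchyData u)) hInt ?_).trans ?_
  · refine hestimate M hM ⟨u, hu⟩ fun x hx => ?_
    rw [SmoothFun.coe_laplacian, SmoothFun.coe_laplacian]
    exact hbound x hx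
  · rw [← mul_assoc β]
    gcongr ?_ * _
    exact two_mul_mul_exp_le hμ (by positivity)

theorem stmt_12 (n : ℕ) (hn : 2 ≤ n) :
    ∃ κ : ℝ, κ ∈ Set.Ioo (0 : ℝ) 1 ∧ ∃ C : ℝ, 0 < C ∧
      ∀ (W : EuclideanSpace ℝ (Fin n) → ℝ), Measurable W →
      ∀ (M : ℝ), 0 ≤ M → (∀ x, |W x| ≤ M) →
      ∀ (u : EuclideanSpace ℝ (Fin n) → ℝ), ContDiff ℝ (⊤ : ℕ∞) u →
        (∀ x ∈ halfBall n (by omega) 3, lap (lap u) x = W x * u x) →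
        (∫ x in halfBall n (by omega) 1, (u x) ^ 2) ^ (1 / 2 : ℝ)
          ≤ Real.exp (C * (1 + M ^ (1 / 3 : ℝ)))
            * ((∫ x in halfBall n (by omega) 2, (u x) ^ 2) ^ (1 / 2 : ℝ)) ^ κ
            * (∑ j ∈ Finset.range 4,
                Real.sqrt (bdryHnormSq n (3 - j) 2 ((pd (lastIdx n (by omega)))^[j] u)))
              ^ (1 - κ) := by
  obtain ⟨κ, hκ, C, hC, hbound⟩ := stmt_12_general n (by omega)
  refine ⟨κ, hκ, C, hC, fun W _ M hM hW u hu heq => hbound M hM u hu fun x hx => ?_⟩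
  rw [heq x (halfBall_subset_halfBall _ (by norm_num) hx), abs_mul]
  gcongr
  exact hW x
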